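/- arXiv:1805.10838 — 4 statements merged into one kernel-verified Lean document; each statement's English description precedes it below -/
import Mathlib

section
/- Suppose x : [0,T] → ℝⁿ is of the form x(t) = (I^α φ₀)(t) for some φ₀ ∈ L^∞, and let φ ∈ L^∞ satisfy (D^α x)(t) = φ(t) for almost every t ∈ [0,T]. Then for every step size h > 0 and every t ∈ [0,T], the divided Grünwald–Letnikov fractional difference satisfies h^{−α} (Δ_h^α x)(t) = ∫₀^{t/h} φ(t − τh) p_α(τ) dτ, where p_α(τ) = (1/Γ(α)) Σ_{0 ≤ j < τ} (−1)^j C(α,j) (τ − j)^{α−1}. -/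
open MeasureTheory Set Real RealInnerProductSpace

noncomputable section

abbrev Evec (n : ℕ) := EuclideanSpace ℝ (Fin n)

/-- Generalized binomial coefficient `binom a j`. -/
def binomR (a : ℝ) (j : ℕ) : ℝ :=
  (∏ i ∈ Finset.range j, (a - (i : ℝ))) / (Nat.factorial j : ℝ)

/-- Left-sided Riemann–Liouville fractional integral of order `α` with base point `0`. -/
def RLint {E : Type*} [NormedAddCommGroup E] [NormedSpace ℝ E]
    (α : ℝ) (f : ℝ → E) (t : ℝ) : E :=
  (Real.Gamma α)⁻¹ • ∫ τ in (0:ℝ)..t, ((t - τ) ^ (α - 1) : ℝ) • f τ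

/-- Left-sided Riemann–Liouville fractional derivative of order `α` with base point `0`. -/
def RLderiv {E : Type*} [NormedAddCommGroup E] [NormedSpace ℝ E]
    (α : ℝ) (x : ℝ → E) (t : ℝ) : E :=
  deriv (fun s => (Real.Gamma (1 - α))⁻¹ • ∫ τ in (0:ℝ)..s, ((s - τ) ^ (-α) : ℝ) • x τ) t

/-- Caputo fractional derivative of order `α` with base point `0`. -/
def CapDeriv {E : Type*} [NormedAddCommGroup E] [NormedSpace ℝ E]
    (α : ℝ) (x : ℝ → E) (t : ℝ) : E :=
  RLderiv α (fun s => x s - x 0) t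

/-- Grünwald–Letnikov fractional difference of order `α` with step `h`. -/
def GLdiff {E : Type*} [NormedAddCommGroup E] [NormedSpace ℝ E]
    (α h : ℝ) (x : ℝ → E) (t : ℝ) : E :=
  ∑ j ∈ Finset.range (⌊t / h⌋₊ + 1), ((-1 : ℝ) ^ j * binomR α j) • x (t - (j : ℝ) * h)

/-- The kernel `p_α`. -/
def pker (α : ℝ) (τ : ℝ) : ℝ :=
  (Real.Gamma α)⁻¹ * ∑ j ∈ Finset.range ⌈τ⌉₊, (-1 : ℝ) ^ j * binomR α j * ((τ - (j : ℝ)) ^ (α - 1) : ℝ)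

/-- Mittag-Leffler function `E_α`. -/
def mittagLeffler (α z : ℝ) : ℝ := ∑' k : ℕ, z ^ k / Real.Gamma (α * (k : ℝ) + 1)

/-- `x` is a solution of the Caputo Cauchy problem `(^C D^α x)(t) = f(t, x(t))`, `x 0 = x₀`. -/
def IsCaputoSol (α T : ℝ) {n : ℕ} (f : ℝ → Evec n → Evec n) (x₀ : Evec n)
    (x : ℝ → Evec n) : Prop :=
  (∃ φ : ℝ → Evec n, Measurable φ ∧
    (∃ C : ℝ, ∀ᵐ t ∂volume.restrict (Icc (0:ℝ) T), ‖φ t‖ ≤ C) ∧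
    ∀ t ∈ Icc (0:ℝ) T, x t = x₀ + RLint α φ t) ∧
  ∀ᵐ t ∂volume.restrict (Icc (0:ℝ) T), CapDeriv α x t = f t (x t)

/-- `y` is a solution of the approximating retarded functional-differential Cauchy problem. -/
def IsApproxSol (α T h : ℝ) {n : ℕ} (f : ℝ → Evec n → Evec n) (x₀ : Evec n)
    (y : ℝ → Evec n) : Prop :=
  (∃ Ly : NNReal, LipschitzOnWith Ly y (Icc (0:ℝ) T)) ∧ y 0 = 0 ∧
  ∀ᵐ t ∂volume.restrict (Icc (0:ℝ) T),
    HasDerivAt y (f t (x₀ + ((h ^ (α - 1) : ℝ)) • GLdiff (1 - α) h y t)) t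

/-- `x` is a motion of the conflict-controlled Caputo system for realizations `u`, `v`. -/
def IsCtrlSol (α T : ℝ) {n nu nv : ℕ}
    (g : ℝ → Evec n → Evec nu → Evec nv → Evec n) (x₀ : Evec n)
    (u : ℝ → Evec nu) (v : ℝ → Evec nv) (x : ℝ → Evec n) : Prop :=
  (∃ φ : ℝ → Evec n, Measurable φ ∧
    (∃ C : ℝ, ∀ᵐ t ∂volume.restrict (Icc (0:ℝ) T), ‖φ t‖ ≤ C) ∧
    ∀ t ∈ Icc (0:ℝ) T, x t = x₀ + RLint α φ t) ∧
  ∀ᵐ t ∂volume.restrict (Icc (0:ℝ) T), CapDeriv α x t = g t (x t) (u t) (v t)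

/-- `y` is a motion of the approximating conflict-controlled system for realizations `ũ`, `ṽ`. -/
def IsCtrlApproxSol (α T h : ℝ) {n nu nv : ℕ}
    (g : ℝ → Evec n → Evec nu → Evec nv → Evec n) (x₀ : Evec n)
    (ut : ℝ → Evec nu) (vt : ℝ → Evec nv) (y : ℝ → Evec n) : Prop :=
  (∃ Ly : NNReal, LipschitzOnWith Ly y (Icc (0:ℝ) T)) ∧ y 0 = 0 ∧
  ∀ᵐ t ∂volume.restrict (Icc (0:ℝ) T),
    HasDerivAt y (g t (x₀ + ((h ^ (α - 1) : ℝ)) • GLdiff (1 - α) h y t) (ut t) (vt t)) t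


/-- Truncated power kernel. -/
def kern (a u : ℝ) : ℝ := if 0 < u then u ^ (a - 1) else 0

lemma kern_nonneg (a u : ℝ) : 0 ≤ kern a u := by
  unfold kern; split_ifs with h
  · positivity
  · exact le_rfl

lemma kern_of_nonpos {a u : ℝ} (h : u ≤ 0) : kern a u = 0 := by
  unfold kern; rw [if_neg (not_lt.2 h)]

lemma measurable_kern (a : ℝ) : Measurable (kern a) := by
  unfold kern
  exact Measurable.ite measurableSet_Ioi (by fun_prop) measurable_const

lemma integrable_betaPDFReal {a b : ℝ} (ha : 0 < a) (hb : 0 < b) :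
    Integrable (ProbabilityTheory.betaPDFReal a b) ∧
      ∫ u, ProbabilityTheory.betaPDFReal a b u = 1 := by
  have h1 := ProbabilityTheory.lintegral_betaPDF_eq_one ha hb
  have hnn : 0 ≤ᵐ[volume] ProbabilityTheory.betaPDFReal a b := by
    refine Filter.Eventually.of_forall fun u => ?_
    by_cases hu : 0 < u ∧ u < 1
    · exact (ProbabilityTheory.betaPDFReal_pos hu.1 hu.2 ha hb).le
    · simp [ProbabilityTheory.betaPDFReal, hu]
  have hm := ProbabilityTheory.stronglyMeasurable_betaPDFReal a b
  constructor
  · refine (lintegral_ofReal_ne_top_iff_integrable hm.aestronglyMeasurable hnn).1 ?_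
    change (∫⁻ u, ProbabilityTheory.betaPDF a b u) ≠ _
    rw [h1]; simp
  · rw [integral_eq_lintegral_of_nonneg_ae hnn hm.aestronglyMeasurable]
    change (∫⁻ u, ProbabilityTheory.betaPDF a b u).toReal = _
    rw [h1]; simp

lemma kern_kern {α : ℝ} (hα : α ∈ Ioo (0:ℝ) 1) {r s : ℝ} (hrs : r < s) (τ : ℝ) :
    kern (1 - α) (s - τ) * kern α (τ - r) =
      (Gamma α * Gamma (1 - α)) * (s - r)⁻¹ *
        ProbabilityTheory.betaPDFReal α (1 - α) ((τ - r) / (s - r)) := by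
  have hsr : 0 < s - r := by linarith
  have h1 : 0 < (τ - r) / (s - r) ↔ 0 < τ - r := by
    constructor
    · intro h; by_contra h'
      exact absurd (div_nonpos_of_nonpos_of_nonneg (not_lt.1 h') hsr.le) (not_le.2 h)
    · intro h; positivity
  have h2 : (τ - r) / (s - r) < 1 ↔ 0 < s - τ := by
    rw [div_lt_one hsr]; constructor <;> intro h <;> linarith
  unfold kern ProbabilityTheory.betaPDFReal
  simp only [h1, h2]
  by_cases p : 0 < τ - r
  · by_cases q : 0 < s - τ
    · rw [if_pos p, if_pos q, if_pos ⟨p, q⟩]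
      have e : 1 - (τ - r) / (s - r) = (s - τ) / (s - r) := by field_simp; ring
      have g1 := (Gamma_pos_of_pos hα.1).ne'
      have g2 := (Gamma_pos_of_pos (sub_pos.2 hα.2)).ne'
      rw [e, div_rpow p.le hsr.le, div_rpow q.le hsr.le, ProbabilityTheory.beta]
      have e2 : (s - r) ^ (α - 1) * (s - r) ^ (1 - α - 1) = (s - r)⁻¹ := by
        rw [← rpow_add hsr, ← rpow_neg_one]; congr 1; ring
      have n1 : (s - r) ^ (α - 1) ≠ 0 := (rpow_pos_of_pos hsr _).ne'
      have n2 : (s - r) ^ (1 - α - 1) ≠ 0 := (rpow_pos_of_pos hsr _).ne'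
      rw [← e2, show α + (1 - α) = 1 by ring, Gamma_one]
      field_simp
    · simp [p, q]
  · simp [p]

lemma integral_kern_kern {α : ℝ} (hα : α ∈ Ioo (0:ℝ) 1) {r s : ℝ} (hrs : r < s) :
    Integrable (fun τ => kern (1 - α) (s - τ) * kern α (τ - r)) ∧
    ∫ τ, kern (1 - α) (s - τ) * kern α (τ - r) = Gamma α * Gamma (1 - α) := by
  have hsr : 0 < s - r := by linarith
  obtain ⟨hi, hv⟩ := integrable_betaPDFReal hα.1 (sub_pos.2 hα.2)
  simp_rw [kern_kern hα hrs]
  constructor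
  · refine Integrable.const_mul ?_ _
    exact (hi.comp_div hsr.ne').comp_sub_right r
  · rw [integral_const_mul,
      integral_sub_right_eq_self (fun τ => ProbabilityTheory.betaPDFReal α (1 - α) (τ / (s - r))) r,
      Measure.integral_comp_div, hv, abs_of_pos hsr]
    have := hsr.ne'
    simp only [smul_eq_mul]
    field_simp

lemma RL_kern {E : Type*} [NormedAddCommGroup E] [NormedSpace ℝ E]
    {a : ℝ} (ha : a ≠ 1) (f : ℝ → E) {τ s : ℝ} (h0 : 0 ≤ τ) (hs : τ ≤ s) :
    ∫ r in (0:ℝ)..τ, ((τ - r) ^ (a - 1) : ℝ) • f r = ∫ r in Ioc 0 s, kern a (τ - r) • f r := by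
  rw [intervalIntegral.integral_of_le h0]
  rw [← integral_indicator measurableSet_Ioc, ← integral_indicator measurableSet_Ioc]
  congr 1
  ext1 r
  unfold indicator kern
  by_cases h1 : 0 < r
  · rcases lt_trichotomy r τ with h | h | h
    · simp [h1, h.le, h.le.trans hs, h]
    · subst h; simp [sub_ne_zero.2 ha]
    · simp [h1, h.not_ge, h.not_gt]
  · simp [h1]

lemma double_int {E : Type*} [NormedAddCommGroup E] [NormedSpace ℝ E] [CompleteSpace E]
    {α : ℝ} (hα : α ∈ Ioo (0:ℝ) 1) {f : ℝ → E} {s : ℝ}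
    (hf : IntegrableOn f (Ioc 0 s)) :
    ∫ τ in Ioc 0 s, kern (1 - α) (s - τ) • ∫ r in Ioc 0 s, kern α (τ - r) • f r =
      (Gamma α * Gamma (1 - α)) • ∫ r in Ioc 0 s, f r := by
  set μ := volume.restrict (Ioc 0 s) with hμ
  have hlt : ∀ᵐ r ∂μ, r < s := by
    have h1 : ∀ᵐ r ∂μ, r ∈ Ioc 0 s := ae_restrict_mem measurableSet_Ioc
    have h2 : ∀ᵐ r ∂μ, r ≠ s := ae_restrict_of_ae (Measure.ae_ne volume s)
    filter_upwards [h1, h2] with r a b using lt_of_le_of_ne a.2 b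
  have hint : Integrable (Function.uncurry fun τ r =>
      (kern (1 - α) (s - τ) * kern α (τ - r)) • f r) (volume.prod μ) := by
    rw [integrable_prod_iff']
    · constructor
      · filter_upwards [hlt] with r hr
        exact Integrable.smul_const (f := fun τ => kern (1 - α) (s - τ) * kern α (τ - r)) (integral_kern_kern hα hr).1 (f r)
      · refine Integrable.congr (hf.norm.const_mul (Gamma α * Gamma (1 - α))) ?_
        filter_upwards [hlt] with r hr
        rw [← (integral_kern_kern hα hr).2, ← integral_mul_const]
        congr 1; ext1 τ
        simp only [Function.uncurry, norm_smul]
        rw [Real.norm_of_nonneg (mul_nonneg (kern_nonneg _ _) (kern_nonneg _ _))]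
    · refine AEStronglyMeasurable.smul (Measurable.aestronglyMeasurable ?_)
        hf.aestronglyMeasurable.comp_snd
      exact ((measurable_kern _).comp (by fun_prop)).mul ((measurable_kern _).comp (by fun_prop))
  have hsw := integral_integral_swap hint
  have e1 : ∫ τ, kern (1 - α) (s - τ) • ∫ r, kern α (τ - r) • f r ∂μ ∂μ =
      ∫ τ, ∫ r, (kern (1 - α) (s - τ) * kern α (τ - r)) • f r ∂μ := by
    simp_rw [mul_smul, integral_smul]
    rw [hμ]
    refine setIntegral_eq_integral_of_forall_compl_eq_zero fun τ hτ => ?_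
    by_cases h0 : 0 < τ
    · have : s < τ := by
        by_contra h; exact hτ ⟨h0, not_lt.1 h⟩
      rw [kern_of_nonpos (by linarith), zero_smul]
    · rw [setIntegral_eq_zero_of_forall_eq_zero, smul_zero]
      intro r hr
      rw [kern_of_nonpos (by linarith [hr.1]), zero_smul]
  rw [e1, hsw, ← integral_smul]
  refine integral_congr_ae ?_
  filter_upwards [hlt] with r hr
  rw [integral_smul_const, (integral_kern_kern hα hr).2]

lemma phi_eq {E : Type*} [NormedAddCommGroup E] [NormedSpace ℝ E] [CompleteSpace E]
    {α T : ℝ} (hα : α ∈ Ioo (0:ℝ) 1) (hT : 0 < T) {x φ₀ φ : ℝ → E}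
    (hi : IntegrableOn φ₀ (Icc 0 T))
    (hx : ∀ t ∈ Icc (0:ℝ) T, x t = RLint α φ₀ t)
    (hDx : ∀ᵐ t ∂volume.restrict (Icc (0:ℝ) T), RLderiv α x t = φ t) :
    ∀ᵐ t ∂volume.restrict (Icc (0:ℝ) T), φ₀ t = φ t := by
  have g1 := (Gamma_pos_of_pos hα.1).ne'
  have g2 := (Gamma_pos_of_pos (sub_pos.2 hα.2)).ne'
  have key : ∀ s ∈ Icc (0:ℝ) T, (Gamma (1 - α))⁻¹ •
      ∫ τ in (0:ℝ)..s, ((s - τ) ^ (-α) : ℝ) • x τ = ∫ r in (0:ℝ)..s, φ₀ r := by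
    intro s hs
    have hsub : Ioc 0 s ⊆ Icc 0 T := fun r hr => ⟨hr.1.le, hr.2.trans hs.2⟩
    have e := RL_kern (a := 1 - α) (by linarith [hα.1]) x hs.1 le_rfl
    rw [show 1 - α - 1 = -α by ring] at e
    rw [e]
    have e2 : ∫ τ in Ioc 0 s, kern (1 - α) (s - τ) • x τ = (Gamma α)⁻¹ •
        ∫ τ in Ioc 0 s, kern (1 - α) (s - τ) • ∫ r in Ioc 0 s, kern α (τ - r) • φ₀ r := by
      rw [← integral_smul]
      refine setIntegral_congr_fun measurableSet_Ioc fun τ hτ => ?_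
      beta_reduce
      rw [hx τ (hsub hτ), RLint, RL_kern hα.2.ne φ₀ hτ.1.le hτ.2, smul_comm]
    rw [e2, double_int hα (hi.mono_set hsub), smul_smul, smul_smul,
      intervalIntegral.integral_of_le hs.1]
    rw [show (Gamma (1 - α))⁻¹ * (Gamma α)⁻¹ * (Gamma α * Gamma (1 - α)) = 1 by field_simp,
      one_smul]
  have hii : IntervalIntegrable φ₀ volume 0 T :=
    (intervalIntegrable_iff_integrableOn_Icc_of_le hT.le).2 hi
  have hd := hii.ae_hasDerivAt_integral
  have h1 : ∀ᵐ t ∂volume.restrict (Icc (0:ℝ) T), t ∈ Icc (0:ℝ) T := ae_restrict_mem measurableSet_Icc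
  have h2 : ∀ᵐ t ∂volume.restrict (Icc (0:ℝ) T), t ≠ 0 := ae_restrict_of_ae (Measure.ae_ne volume 0)
  have h3 : ∀ᵐ t ∂volume.restrict (Icc (0:ℝ) T), t ≠ T := ae_restrict_of_ae (Measure.ae_ne volume T)
  filter_upwards [h1, h2, h3, hDx, ae_restrict_of_ae hd] with t ht t0 tT hD hd
  rw [← hD, RLderiv]
  have ht0 : 0 < t := lt_of_le_of_ne ht.1 t0.symm
  have htT : t < T := lt_of_le_of_ne ht.2 tT
  have hd' := hd (by rw [uIcc_of_le hT.le]; exact ht) 0 (by simp)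
  have hev : (fun s => (Gamma (1 - α))⁻¹ • ∫ τ in (0:ℝ)..s, ((s - τ) ^ (-α) : ℝ) • x τ) =ᶠ[nhds t]
      fun s => ∫ r in (0:ℝ)..s, φ₀ r := by
    filter_upwards [Icc_mem_nhds ht0 htT] with s hs using key s hs
  rw [hev.deriv_eq]
  exact hd'.deriv.symm

lemma kern_scale {a h : ℝ} (hh : 0 < h) (u : ℝ) : kern a (u / h) = h ^ (1 - a) * kern a u := by
  unfold kern
  by_cases p : 0 < u
  · rw [if_pos (by positivity), if_pos p, div_rpow p.le hh.le, show 1 - a = -(a - 1) by ring,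
      rpow_neg hh.le]
    field_simp
  · have : ¬ 0 < u / h := not_lt.2 (div_nonpos_of_nonpos_of_nonneg (not_lt.1 p) hh.le)
    simp [p, this]

lemma pker_eq {α τ : ℝ} {N : ℕ} (hN : ⌈τ⌉₊ ≤ N) :
    pker α τ = (Gamma α)⁻¹ * ∑ j ∈ Finset.range N, (-1 : ℝ) ^ j * binomR α j * kern α (τ - j) := by
  unfold pker
  congr 1
  rw [← Finset.sum_subset (Finset.range_subset_range.2 hN)]
  · refine Finset.sum_congr rfl fun j hj => ?_
    rw [kern, if_pos]
    exact sub_pos.2 (Nat.lt_ceil.1 (Finset.mem_range.1 hj))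
  · intro j _ hj
    rw [kern_of_nonpos, mul_zero]
    have := Nat.ceil_le.1 (not_lt.1 (fun h => hj (Finset.mem_range.2 h)))
    linarith

lemma integrableOn_kern {a : ℝ} (ha : 0 < a) (c t : ℝ) (hc : c ≤ t) (c0 : 0 ≤ c):
    IntegrableOn (fun σ => kern a (c - σ)) (Ioc 0 t) := by
  have h1 : IntervalIntegrable (fun u : ℝ => u ^ (a - 1)) volume 0 c :=
    intervalIntegral.intervalIntegrable_rpow' (by linarith)
  have h2 := (intervalIntegrable_iff_integrableOn_Ioc_of_le c0).1 h1
  have h3 : Integrable (indicator (Ioc 0 c) (fun u : ℝ => u ^ (a - 1))) :=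
    (integrable_indicator_iff measurableSet_Ioc).2 h2
  have h4 := (h3.comp_sub_left c).integrableOn (s := Ioc 0 t)
  refine h4.congr ?_
  filter_upwards [ae_restrict_mem measurableSet_Ioc] with σ hσ
  unfold kern indicator
  have : c - σ ≤ c := by linarith [hσ.1]
  simp [hσ.1.le]

theorem stmt5 (α T : ℝ) (hα : α ∈ Ioo (0:ℝ) 1) (hT : 0 < T) (n : ℕ)
    (x φ₀ φ : ℝ → Evec n)
    (hφ₀m : Measurable φ₀)
    (C₀ : ℝ) (hφ₀b : ∀ᵐ t ∂volume.restrict (Icc (0:ℝ) T), ‖φ₀ t‖ ≤ C₀)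
    (hx : ∀ t ∈ Icc (0:ℝ) T, x t = RLint α φ₀ t)
    (hφm : Measurable φ)
    (C : ℝ) (hφb : ∀ᵐ t ∂volume.restrict (Icc (0:ℝ) T), ‖φ t‖ ≤ C)
    (hDx : ∀ᵐ t ∂volume.restrict (Icc (0:ℝ) T), RLderiv α x t = φ t) :
    ∀ h : ℝ, 0 < h → ∀ t ∈ Icc (0:ℝ) T,
      ((h ^ (-α) : ℝ)) • GLdiff α h x t =
        ∫ τ in (0:ℝ)..(t / h), pker α τ • φ (t - τ * h) := by
  have hb : ∀ {f : ℝ → Evec n} {K : ℝ}, Measurable f →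
      (∀ᵐ t ∂volume.restrict (Icc (0:ℝ) T), ‖f t‖ ≤ K) → IntegrableOn f (Icc 0 T) := by
    intro f K hm hK
    exact Measure.integrableOn_of_bounded (by simp) hm.aestronglyMeasurable hK
  have hae := phi_eq hα hT (hb hφ₀m hφ₀b) hx hDx
  intro h hh t ht
  have g1 := (Gamma_pos_of_pos hα.1).ne'
  have hsub : Ioc 0 t ⊆ Icc 0 T := fun r hr => ⟨hr.1.le, hr.2.trans ht.2⟩
  have haet : ∀ᵐ r ∂volume.restrict (Ioc 0 t), φ₀ r = φ r := ae_restrict_of_ae_restrict_of_subset hsub hae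
  have hbt : ∀ᵐ r ∂volume.restrict (Ioc 0 t), ‖φ r‖ ≤ C := ae_restrict_of_ae_restrict_of_subset hsub hφb
  set N := ⌊t / h⌋₊ + 1 with hN
  have hj : ∀ j ∈ Finset.range N, 0 ≤ t - j * h ∧ t - j * h ≤ t := by
    intro j hj
    have h1 : j ≤ ⌊t / h⌋₊ := Nat.lt_succ_iff.1 (Finset.mem_range.1 hj)
    have h2 : (j : ℝ) ≤ t / h := (Nat.le_floor_iff (div_nonneg ht.1 hh.le)).1 h1
    rw [le_div_iff₀ hh] at h2
    have : 0 ≤ (j : ℝ) * h := by positivity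
    constructor <;> linarith
  have hxj : ∀ j ∈ Finset.range N, x (t - j * h) =
      (Gamma α)⁻¹ • ∫ σ in Ioc 0 t, kern α (t - j * h - σ) • φ σ := by
    intro j hjN
    obtain ⟨h1, h2⟩ := hj j hjN
    rw [hx _ ⟨h1, h2.trans ht.2⟩, RLint, RL_kern hα.2.ne φ₀ h1 h2]
    congr 1
    refine integral_congr_ae ?_
    filter_upwards [haet] with r hr
    rw [hr]
  have hint : ∀ j ∈ Finset.range N,
      Integrable (fun σ => kern α (t - j * h - σ) • φ σ) (volume.restrict (Ioc 0 t)) := by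
    intro j hjN
    obtain ⟨h1, h2⟩ := hj j hjN
    exact Integrable.smul_bdd (integrableOn_kern hα.1 _ t h2 h1) C hφm.aestronglyMeasurable hbt
  have hR : ∫ τ in (0:ℝ)..(t / h), pker α τ • φ (t - τ * h) =
      h⁻¹ • ∫ σ in (0:ℝ)..t, pker α ((t - σ) / h) • φ σ := by
    have := intervalIntegral.integral_comp_sub_mul (a := 0) (b := t / h)
      (fun σ => pker α ((t - σ) / h) • φ σ) hh.ne' t
    rw [mul_div_cancel₀ _ hh.ne', sub_self, mul_zero, sub_zero] at this
    rw [← this]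
    congr 1; ext1 τ
    rw [sub_sub_cancel, mul_div_cancel_left₀ _ hh.ne', mul_comm]
  rw [hR, intervalIntegral.integral_of_le ht.1]
  have hS : ∫ σ in Ioc 0 t, pker α ((t - σ) / h) • φ σ =
      ∫ σ in Ioc 0 t, ∑ j ∈ Finset.range N,
        ((Gamma α)⁻¹ * h ^ (1 - α) * ((-1 : ℝ) ^ j * binomR α j)) • (kern α (t - j * h - σ) • φ σ) := by
    refine setIntegral_congr_fun measurableSet_Ioc fun σ hσ => ?_
    beta_reduce
    have hc : ⌈(t - σ) / h⌉₊ ≤ N := by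
      refine (Nat.ceil_le_ceil ?_).trans (Nat.ceil_le_floor_add_one (t / h))
      gcongr; linarith [hσ.1]
    rw [pker_eq hc, Finset.mul_sum, Finset.sum_smul]
    refine Finset.sum_congr rfl fun j _ => ?_
    rw [show (t - σ) / h - j = (t - j * h - σ) / h by field_simp; ring, kern_scale hh, smul_smul]
    congr 1; ring
  rw [hS, integral_finsetSum _ (fun j hjN => Integrable.fun_smul _ (hint j hjN)), GLdiff, Finset.smul_sum,
    Finset.smul_sum]
  refine Finset.sum_congr rfl fun j hjN => ?_
  rw [hxj j hjN, integral_smul, smul_smul, smul_smul, smul_smul]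
  congr 1
  rw [show 1 - α = 1 + -α by ring, rpow_add hh, rpow_one]
  field_simp
end
end

section
/- The kernel function p_α(τ) = (1/Γ(α)) Σ_{0 ≤ j < τ} (−1)^j binom(α,j) (τ − j)^{α−1}, defined for τ > 0, satisfies ∫₀^∞ |p_α(τ)| dτ < ∞ and ∫₀^∞ p_α(τ) dτ = 1. -/
open MeasureTheory Set Real RealInnerProductSpace

noncomputable section

def cf (a : ℝ) (j : ℕ) : ℝ := (-1 : ℝ) ^ j * binomR a j

def bb (b : ℝ) (k : ℕ) : ℝ := Real.Gamma (k + b) / (Nat.factorial k : ℝ)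

lemma cf_zero (a : ℝ) : cf a 0 = 1 := by simp [cf, binomR]

lemma cf_succ (a : ℝ) (j : ℕ) : cf a (j + 1) = cf a j * ((j - a) / (j + 1)) := by
  unfold cf binomR
  rw [Finset.prod_range_succ, Nat.factorial_succ, pow_succ]
  have h1 : (Nat.factorial j : ℝ) ≠ 0 := by positivity
  have h2 : (j : ℝ) + 1 ≠ 0 := by positivity
  push_cast
  field_simp
  ring

lemma binomR_eq (a : ℝ) (j : ℕ) : binomR a j = Ring.choose a j := by
  rw [Ring.choose_eq_smul, ← Polynomial.aeval_eq_smeval, Polynomial.aeval_def,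
    Polynomial.eval₂_eq_eval_map, descPochhammer_map,
    descPochhammer_eval_eq_prod_range, binomR, smul_eq_mul, div_eq_inv_mul]

lemma cf_vander (a b : ℝ) (n : ℕ) :
    ∑ ij ∈ Finset.HasAntidiagonal.antidiagonal n, cf a ij.1 * cf b ij.2 = cf (a + b) n := by
  unfold cf
  simp only [binomR_eq]
  rw [Ring.add_choose_eq n (Commute.all a b), Finset.mul_sum]
  refine Finset.sum_congr rfl fun ij h => ?_
  rw [← Finset.HasAntidiagonal.mem_antidiagonal.mp h, pow_add]
  ring

lemma cf_zero_left (n : ℕ) : cf 0 n = if n = 0 then 1 else 0 := by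
  simp only [cf, binomR_eq, Ring.choose_zero_ite]
  split_ifs with h <;> simp [h]

lemma bb_eq {b : ℝ} (hb : 0 < b) (k : ℕ) : bb b k = Real.Gamma b * cf (-b) k := by
  induction k with
  | zero => simp [bb, cf_zero]
  | succ k ih =>
    rw [cf_succ, ← mul_assoc, ← ih]
    unfold bb
    have : ((k + 1 : ℕ) : ℝ) + b = (k + b) + 1 := by push_cast; ring
    rw [this, Real.Gamma_add_one (by positivity), Nat.factorial_succ]
    have h1 : (Nat.factorial k : ℝ) ≠ 0 := by positivity
    have h2 : (k : ℝ) + 1 ≠ 0 := by positivity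
    push_cast
    field_simp
    ring

lemma bb_le {b : ℝ} (hb : b ∈ Ioo (0:ℝ) 1) (k : ℕ) (hk : 0 < k) : bb b k ≤ (k : ℝ) ^ (b - 1) := by
  obtain ⟨h0, h1⟩ := hb
  have hk' : (0:ℝ) < k := by exact_mod_cast hk
  have h := Real.Gamma_mul_add_mul_le_rpow_Gamma_mul_rpow_Gamma (s := k) (t := k + 1)
    (a := 1 - b) (b := b) hk' (by positivity) (by linarith) h0 (by ring)
  have e : (1 - b) * (k:ℝ) + b * (k + 1) = k + b := by ring
  have hG := Real.Gamma_pos_of_pos hk'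
  rw [e, Real.Gamma_add_one hk'.ne', Real.mul_rpow hk'.le hG.le, mul_left_comm,
    ← Real.rpow_add hG, sub_add_cancel, Real.rpow_one] at h
  unfold bb
  rw [div_le_iff₀ (by positivity), ← Real.Gamma_nat_eq_factorial, Real.Gamma_add_one hk'.ne',
    Real.rpow_sub_one hk'.ne']
  refine h.trans_eq ?_
  field_simp

lemma le_bb {b : ℝ} (hb : b ∈ Ioo (0:ℝ) 1) (k : ℕ) : ((k : ℝ) + 1) ^ (b - 1) ≤ bb b k := by
  obtain ⟨h0, h1⟩ := hb
  have hk' : (0:ℝ) < k + b := by positivity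
  have h := Real.Gamma_mul_add_mul_le_rpow_Gamma_mul_rpow_Gamma (s := k + b) (t := k + b + 1)
    (a := b) (b := 1 - b) hk' (by positivity) h0 (by linarith) (by ring)
  have e : b * ((k:ℝ) + b) + (1 - b) * (k + b + 1) = k + 1 := by ring
  have hG := Real.Gamma_pos_of_pos hk'
  rw [e, Real.Gamma_add_one hk'.ne', Real.mul_rpow hk'.le hG.le, mul_left_comm,
    ← Real.rpow_add hG, add_sub_cancel, Real.rpow_one, Real.Gamma_nat_eq_factorial] at h
  have h2 : ((k : ℝ) + 1) ^ (b - 1) ≤ (k + b) ^ (b - 1) :=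
    Real.rpow_le_rpow_of_nonpos hk' (by linarith) (by linarith)
  refine h2.trans ?_
  unfold bb
  rw [le_div_iff₀ (by positivity)]
  refine (mul_le_mul_of_nonneg_left h (by positivity)).trans_eq ?_
  rw [← mul_assoc, ← Real.rpow_add hk']
  simp

lemma cf_sum (a : ℝ) (n : ℕ) : ∑ j ∈ Finset.range (n + 1), cf a j = cf (a - 1) n := by
  induction n with
  | zero => simp [cf_zero]
  | succ n ih =>
    rw [Finset.sum_range_succ, ih]
    have : ∀ m : ℕ, cf a (m + 1) = cf (a - 1) m * (-a / (m + 1)) := by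
      intro m
      induction m with
      | zero => simp [cf_succ, cf_zero]
      | succ m ih =>
        rw [cf_succ, ih, cf_succ (a - 1)]
        have h2 : (m : ℝ) + 1 ≠ 0 := by positivity
        have h3 : (m : ℝ) + 1 + 1 ≠ 0 := by positivity
        push_cast
        field_simp
        ring
    rw [this, cf_succ]
    have h2 : (n : ℝ) + 1 ≠ 0 := by positivity
    field_simp
    ring

lemma cf_neg {a : ℝ} (ha : a ∈ Ioo (0:ℝ) 1) (j : ℕ) : cf a (j + 1) ≤ 0 := by
  induction j with
  | zero => rw [cf_succ, cf_zero]; simp; linarith [ha.1]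
  | succ j ih =>
    rw [cf_succ]
    refine mul_nonpos_of_nonpos_of_nonneg ih (div_nonneg ?_ (by positivity))
    push_cast
    have := ha.2
    have : (0:ℝ) ≤ j := by positivity
    linarith

lemma cf_tendsto {a : ℝ} (ha : a ∈ Ioo (0:ℝ) 1) :
    Filter.Tendsto (fun n => cf (a - 1) n) Filter.atTop (nhds 0) := by
  have hb : 1 - a ∈ Ioo (0:ℝ) 1 := ⟨by linarith [ha.2], by linarith [ha.1]⟩
  have hG := Real.Gamma_pos_of_pos hb.1
  have e : ∀ n, cf (a - 1) n = (Real.Gamma (1 - a))⁻¹ * bb (1 - a) n := by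
    intro n
    rw [bb_eq hb.1, neg_sub, inv_mul_cancel_left₀ hG.ne']
  simp only [e]
  rw [← mul_zero (Real.Gamma (1 - a))⁻¹]
  refine Filter.Tendsto.const_mul _ ?_
  have ht : Filter.Tendsto (fun n : ℕ => (n : ℝ) ^ (-a)) Filter.atTop (nhds 0) :=
    (tendsto_rpow_neg_atTop ha.1).comp tendsto_natCast_atTop_atTop
  refine tendsto_of_tendsto_of_tendsto_of_le_of_le' tendsto_const_nhds ht ?_ ?_
  · exact Filter.Eventually.of_forall fun n => (Real.rpow_nonneg (by positivity) _).trans (le_bb hb n)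
  · filter_upwards [Filter.eventually_gt_atTop 0] with n hn
    refine (bb_le hb n hn).trans_eq ?_
    congr 1; ring

lemma cf_hasSum {a : ℝ} (ha : a ∈ Ioo (0:ℝ) 1) :
    Summable (fun n => ‖cf a n‖) ∧ ∑' n, cf a n = 0 := by
  have ht := cf_tendsto ha
  have hpos : ∀ n, 0 ≤ cf (a - 1) n := by
    intro n
    have hb : 1 - a ∈ Ioo (0:ℝ) 1 := ⟨by linarith [ha.2], by linarith [ha.1]⟩
    have h1 := (Real.rpow_nonneg (by positivity) _).trans (le_bb hb n)
    rw [bb_eq hb.1, neg_sub] at h1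
    exact nonneg_of_mul_nonneg_right h1 (Real.Gamma_pos_of_pos hb.1)
  have hs : Summable (fun n => ‖cf a n‖) := by
    rw [← summable_nat_add_iff 1]
    refine summable_of_sum_range_le (c := 1) (fun _ => norm_nonneg _) fun n => ?_
    have h := cf_sum a n
    rw [Finset.sum_range_succ', cf_zero] at h
    have : ∑ i ∈ Finset.range n, ‖cf a (i + 1)‖ = - ∑ i ∈ Finset.range n, cf a (i + 1) := by
      rw [← Finset.sum_neg_distrib]
      exact Finset.sum_congr rfl fun i _ => by
        rw [Real.norm_eq_abs, abs_of_nonpos (cf_neg ha i)]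
    rw [this]
    linarith [hpos n]
  refine ⟨hs, ?_⟩
  have h1 := (hs.of_norm.hasSum.tendsto_sum_nat).comp (Filter.tendsto_add_atTop_nat 1)
  refine tendsto_nhds_unique h1 ?_
  refine ht.congr fun n => ?_
  simp [cf_sum]

def dd (a : ℝ) (k : ℕ) (t : ℝ) : ℝ := (k + t) ^ (a - 1) - bb a k

lemma dd_bound {a : ℝ} (ha : a ∈ Ioo (0:ℝ) 1) (k : ℕ) (hk : 0 < k) {t : ℝ} (ht : t ∈ Ioc (0:ℝ) 1) :
    ‖dd a k t‖ ≤ (k:ℝ) ^ (a - 1) - ((k:ℝ) + 1) ^ (a - 1) := by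
  have hk' : (0:ℝ) < k := by exact_mod_cast hk
  have h1 := bb_le ha k hk
  have h2 := le_bb ha k
  have ha2 := ha.2
  have h3 : ((k : ℝ) + t) ^ (a - 1) ≤ k ^ (a - 1) :=
    Real.rpow_le_rpow_of_nonpos hk' (by linarith [ht.1]) (by linarith)
  have h4 : ((k : ℝ) + 1) ^ (a - 1) ≤ (k + t) ^ (a - 1) :=
    Real.rpow_le_rpow_of_nonpos (by linarith [ht.1]) (by linarith [ht.2]) (by linarith)
  rw [dd, Real.norm_eq_abs, abs_le]
  constructor <;> linarith

lemma dd_int {a : ℝ} (ha : a ∈ Ioo (0:ℝ) 1) (k : ℕ) : IntegrableOn (dd a k) (Ioc 0 1) := by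
  have h : IntervalIntegrable (fun x : ℝ => x ^ (a - 1)) volume (k + 0) (k + 1) :=
    intervalIntegral.intervalIntegrable_rpow' (by linarith [ha.1])
  have h2 := (h.comp_add_left (k:ℝ))
  simp only [add_sub_cancel_left] at h2
  rw [intervalIntegrable_iff_integrableOn_Ioc_of_le zero_le_one] at h2
  exact h2.sub (integrableOn_const (by simp))

lemma dd_summable {a : ℝ} (ha : a ∈ Ioo (0:ℝ) 1) :
    Summable (fun k => ∫ t in Ioc (0:ℝ) 1, ‖dd a k t‖) := by
  rw [← summable_nat_add_iff 1]
  refine summable_of_sum_range_le (c := 1) (fun k => integral_nonneg fun _ => norm_nonneg _) fun n => ?_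
  have h : ∀ k : ℕ, ∫ t in Ioc (0:ℝ) 1, ‖dd a (k + 1) t‖ ≤
      (((k:ℕ):ℝ) + 1) ^ (a - 1) - (((k + 1 : ℕ) : ℝ) + 1) ^ (a - 1) := by
    intro k
    have h1 : ∫ t in Ioc (0:ℝ) 1, ‖dd a (k + 1) t‖ ≤ ∫ t in Ioc (0:ℝ) 1, 
      ((((k:ℕ):ℝ) + 1) ^ (a - 1) - (((k + 1 : ℕ) : ℝ) + 1) ^ (a - 1)) := by
      refine setIntegral_mono_on (dd_int ha _).norm (integrableOn_const (by simp)) measurableSet_Ioc ?_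
      intro t ht
      have := dd_bound ha (k + 1) (by omega) ht
      push_cast at this ⊢
      exact this
    simpa using h1
  refine (Finset.sum_le_sum fun k _ => h k).trans ?_
  rw [Finset.sum_range_sub' (fun k : ℕ => ((k:ℝ) + 1) ^ (a - 1))]
  have : 0 ≤ ((n:ℝ) + 1) ^ (a - 1) := by positivity
  simp; linarith

lemma pker_eq_s6 {a : ℝ} (ha : a ∈ Ioo (0:ℝ) 1) (n : ℕ) {t : ℝ} (ht : t ∈ Ioc (0:ℝ) 1) :
    pker a (n + t) = (if n = 0 then 1 else 0) + (Real.Gamma a)⁻¹ *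
      ∑ ij ∈ Finset.HasAntidiagonal.antidiagonal n, cf a ij.1 * dd a ij.2 t := by
  have hG := Real.Gamma_pos_of_pos ha.1
  have hc : ⌈(n:ℝ) + t⌉₊ = n + 1 := by
    rw [Nat.ceil_eq_iff (by omega)]
    push_cast
    constructor <;> simp <;> linarith [ht.1, ht.2]
  have hd : (if n = 0 then 1 else 0 : ℝ) = (Real.Gamma a)⁻¹ *
      ∑ ij ∈ Finset.HasAntidiagonal.antidiagonal n, cf a ij.1 * bb a ij.2 := by
    rw [← cf_zero_left, ← add_neg_cancel a, ← cf_vander, Finset.mul_sum]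
    refine Finset.sum_congr rfl fun ij _ => ?_
    rw [bb_eq ha.1]
    field_simp
  rw [hd, ← mul_add, ← Finset.sum_add_distrib, pker, hc]
  congr 1
  rw [Finset.Nat.sum_antidiagonal_eq_sum_range_succ_mk]
  refine Finset.sum_congr rfl fun j hj => ?_
  have hj' : j ≤ n := by simpa [Nat.lt_succ_iff] using hj
  simp only [dd, cf]
  rw [Nat.cast_sub hj', show (n:ℝ) - j + t = n + t - j by ring]
  ring

theorem stmt6 (α : ℝ) (hα : α ∈ Ioo (0:ℝ) 1) :
    IntegrableOn (pker α) (Ioi (0:ℝ)) volume ∧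
    ∫ τ in Ioi (0:ℝ), pker α τ = 1 := by
  have hG := Real.Gamma_pos_of_pos hα.1
  set q : ℕ → ℝ → ℝ := fun n t => (if n = 0 then 1 else 0) + (Real.Gamma α)⁻¹ *
      ∑ ij ∈ Finset.HasAntidiagonal.antidiagonal n, cf α ij.1 * dd α ij.2 t with hq
  have hS : ∀ n : ℕ, IntegrableOn (fun t => ∑ ij ∈ Finset.HasAntidiagonal.antidiagonal n, cf α ij.1 * dd α ij.2 t)
      (Ioc 0 1) := fun n => integrable_finsetSum _ fun ij _ => (dd_int hα _).const_mul _
  have hqi : ∀ n, IntegrableOn (q n) (Ioc 0 1) := fun n =>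
    (integrableOn_const (by simp)).add ((hS n).const_mul _)
  have hpre : ∀ n : ℕ, (fun t : ℝ => (n:ℝ) + t) ⁻¹' (Ioc (n:ℝ) ((n + 1 : ℕ) : ℝ)) = Ioc 0 1 := by
    intro n; ext t; simp
  have hmp : ∀ n : ℕ, MeasurePreserving (fun t : ℝ => (n:ℝ) + t) volume volume := fun n =>
    measurePreserving_add_left volume _
  have hme : ∀ n : ℕ, MeasurableEmbedding (fun t : ℝ => (n:ℝ) + t) := fun n =>
    measurableEmbedding_addLeft _
  have hpi : ∀ n : ℕ, IntegrableOn (pker α) (Ioc (n:ℝ) ((n + 1 : ℕ) : ℝ)) := by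
    intro n
    rw [← (hmp n).integrableOn_comp_preimage (hme n), hpre]
    exact (hqi n).congr_fun (fun t ht => (pker_eq_s6 hα n ht).symm) measurableSet_Ioc
  have hpv : ∀ n : ℕ, ∫ t in Ioc (n:ℝ) ((n + 1 : ℕ) : ℝ), pker α t = ∫ t in Ioc (0:ℝ) 1, q n t := by
    intro n
    rw [← (hmp n).setIntegral_preimage_emb (hme n), hpre]
    exact setIntegral_congr_fun measurableSet_Ioc (fun t ht => pker_eq_s6 hα n ht)
  have hpn : ∀ n : ℕ, ∫ t in Ioc (n:ℝ) ((n + 1 : ℕ) : ℝ), ‖pker α t‖ =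
      ∫ t in Ioc (0:ℝ) 1, ‖q n t‖ := by
    intro n
    rw [← (hmp n).setIntegral_preimage_emb (hme n), hpre]
    exact setIntegral_congr_fun measurableSet_Ioc (fun t ht => congrArg norm (pker_eq_s6 hα n ht))
  have hU : ⋃ n : ℕ, Ioc (n:ℝ) ((n + 1 : ℕ) : ℝ) = Ioi (0:ℝ) := by
    ext x
    simp only [mem_iUnion, mem_Ioc, mem_Ioi]
    constructor
    · rintro ⟨n, h, -⟩
      exact lt_of_le_of_lt (by positivity) h
    · intro hx
      have hc : 0 < ⌈x⌉₊ := Nat.ceil_pos.mpr hx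
      refine ⟨⌈x⌉₊ - 1, ?_, ?_⟩
      · exact Nat.lt_ceil.mp (by omega)
      · rw [Nat.sub_add_cancel hc]; exact Nat.le_ceil x
  obtain ⟨hcs, hc0⟩ := cf_hasSum hα
  have hds := dd_summable hα
  have hδ : HasSum (fun n : ℕ => (if n = 0 then 1 else 0 : ℝ)) 1 := hasSum_ite_eq 0 1
  have hsum : Summable fun n : ℕ => ∫ t in Ioc (n:ℝ) ((n + 1 : ℕ) : ℝ), ‖pker α t‖ := by
    simp only [hpn]
    have hcp := summable_norm_sum_mul_antidiagonal_of_summable_norm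
      (f := fun n => ‖cf α n‖) (g := fun k => ∫ t in Ioc (0:ℝ) 1, ‖dd α k t‖)
      (by simpa using hcs) hds.norm
    refine Summable.of_nonneg_of_le (fun n => integral_nonneg fun _ => norm_nonneg _) (fun n => ?_)
      (hδ.summable.add (hcp.of_norm.mul_left (Real.Gamma α)⁻¹))
    have hi2 : IntegrableOn (fun t => ∑ ij ∈ Finset.HasAntidiagonal.antidiagonal n, ‖cf α ij.1‖ * ‖dd α ij.2 t‖)
      (Ioc 0 1) := integrable_finsetSum _ fun ij _ => (dd_int hα _).norm.const_mul _
    have h1 : ∫ t in Ioc (0:ℝ) 1, ‖q n t‖ ≤ ∫ t in Ioc (0:ℝ) 1, ((if n = 0 then 1 else 0 : ℝ) +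
        (Real.Gamma α)⁻¹ * ∑ ij ∈ Finset.HasAntidiagonal.antidiagonal n, ‖cf α ij.1‖ * ‖dd α ij.2 t‖) := by
      refine setIntegral_mono_on (hqi n).norm
        ((integrableOn_const (by simp)).add (hi2.const_mul _)) measurableSet_Ioc fun t _ => ?_
      refine (norm_add_le _ _).trans (add_le_add ?_ ?_)
      · split_ifs <;> simp
      · rw [norm_mul, Real.norm_of_nonneg (inv_nonneg.mpr hG.le)]
        refine mul_le_mul_of_nonneg_left ?_ (inv_nonneg.mpr hG.le)
        refine (norm_sum_le _ _).trans_eq ?_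
        simp only [norm_mul]
    refine h1.trans_eq ?_
    rw [integral_add (integrable_const _) (hi2.const_mul _), integral_const_mul,
      integral_finsetSum _ (fun ij _ => (dd_int hα _).norm.const_mul _)]
    simp only [integral_const_mul]
    simp
  have hint : IntegrableOn (pker α) (⋃ n : ℕ, Ioc (n:ℝ) ((n + 1 : ℕ) : ℝ)) :=
    integrableOn_iUnion_of_summable_integral_norm hpi hsum
  refine ⟨hU ▸ hint, ?_⟩
  have hdisj : Pairwise (Function.onFun Disjoint fun n : ℕ => Ioc (n:ℝ) ((n + 1 : ℕ) : ℝ)) :=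
    Monotone.pairwise_disjoint_on_Ioc_succ (f := fun n : ℕ => (n:ℝ)) Nat.mono_cast
  rw [← hU, integral_iUnion (fun n => measurableSet_Ioc) hdisj hint]
  simp only [hpv]
  have hv : ∀ n, ∫ t in Ioc (0:ℝ) 1, q n t = (if n = 0 then 1 else 0) + (Real.Gamma α)⁻¹ *
      ∑ ij ∈ Finset.HasAntidiagonal.antidiagonal n, cf α ij.1 * ∫ t in Ioc (0:ℝ) 1, dd α ij.2 t := by
    intro n
    simp only [hq]
    rw [integral_add (integrable_const _) ((hS n).const_mul _), integral_const_mul,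
      integral_finsetSum _ (fun ij _ => (dd_int hα _).const_mul _)]
    simp only [integral_const_mul]
    simp
  simp only [hv]
  have hD : Summable fun k => ‖∫ t in Ioc (0:ℝ) 1, dd α k t‖ :=
    Summable.of_nonneg_of_le (fun _ => norm_nonneg _)
      (fun k => norm_integral_le_integral_norm _) hds
  have hcp := summable_norm_sum_mul_antidiagonal_of_summable_norm hcs hD
  rw [hδ.summable.tsum_add (hcp.of_norm.mul_left _), tsum_mul_left,
    ← tsum_mul_tsum_eq_tsum_sum_antidiagonal_of_summable_norm hcs hD, hc0, hδ.tsum_eq]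
  simp
end
end

section
/- Let W ⊂ C([0,T],ℝⁿ) be a relatively compact set of continuous functions with φ(0) = 0 for all φ ∈ W. Then for every ε > 0 there exists h* > 0 such that for all h ∈ (0, h*], all φ ∈ W, and all t ∈ [0,T], ‖∫₀^{t/h} φ(t − τh) p_α(τ) dτ − φ(t)‖ ≤ ε. -/
open MeasureTheory Set Real RealInnerProductSpace

noncomputable section

lemma binomR_succ (a : ℝ) (j : ℕ) : binomR a (j+1) = binomR a j * (a - j) / (j+1) := by
  unfold binomR
  rw [Finset.prod_range_succ, Nat.factorial_succ]
  push_cast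
  have : (Nat.factorial j : ℝ) ≠ 0 := by positivity
  field_simp

def cc (α : ℝ) (j : ℕ) : ℝ := (-1) ^ j * binomR α j

lemma cc_zero (α : ℝ) : cc α 0 = 1 := by simp [cc, binomR]

lemma cc_succ (α : ℝ) (j : ℕ) : cc α (j+1) = cc α j * (j - α) / (j+1) := by
  unfold cc; rw [binomR_succ, pow_succ]; ring

lemma cc_conv (α : ℝ) (m : ℕ) :
    ∑ j ∈ Finset.range (m+1), cc α j * cc (-α) (m - j) = if m = 0 then 1 else 0 := by
  have h := Ring.add_choose_eq (R := ℝ) (r := α) (s := -α) m (Commute.all _ _)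
  rw [add_neg_cancel, Ring.choose_zero_ite,
    Finset.Nat.sum_antidiagonal_eq_sum_range_succ (fun i j => Ring.choose α i * Ring.choose (-α) j)] at h
  have h2 : (if m = 0 then (1:ℝ) else 0) = (-1) ^ m * (if m = 0 then (1:ℝ) else 0) := by
    split_ifs with hm <;> simp [hm]
  rw [h2, h, Finset.mul_sum]
  refine Finset.sum_congr rfl fun j hj => ?_
  have : j + (m - j) = m := by have := Finset.mem_range.1 hj; omega
  unfold cc
  rw [binomR_eq, binomR_eq]
  conv_rhs => rw [← this, pow_add]
  simp
  ring

/-- Gamma formula. -/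
lemma cc_neg_gamma (β : ℝ) (hβ : 0 < β) (k : ℕ) :
    cc (-β) k = (Gamma β)⁻¹ * (Gamma (k + β) / k.factorial) := by
  induction k with
  | zero => simp [cc_zero, (Gamma_pos_of_pos hβ).ne']
  | succ k ih =>
    rw [cc_succ, ih, Nat.factorial_succ]
    push_cast
    rw [show (k:ℝ) + 1 + β = (k + β) + 1 by ring, Gamma_add_one (by positivity)]
    have : (Nat.factorial k : ℝ) ≠ 0 := by positivity
    have := (Gamma_pos_of_pos hβ).ne'
    field_simp
    ring

lemma ratio_le (β : ℝ) (hβ : β ∈ Ioo (0:ℝ) 1) (k : ℕ) (hk : 1 ≤ k) :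
    Gamma (k + β) / k.factorial ≤ (k:ℝ) ^ (β - 1) := by
  have hk0 : (0:ℝ) < k := by exact_mod_cast hk
  have h := Gamma_mul_add_mul_le_rpow_Gamma_mul_rpow_Gamma (s := k) (t := k + 1) (a := 1 - β) (b := β)
    hk0 (by positivity) (by linarith [hβ.2]) hβ.1 (by ring)
  rw [show (1 - β) * (k:ℝ) + β * (k + 1) = k + β by ring, Gamma_add_one hk0.ne'] at h
  have hf : (k.factorial : ℝ) = k * Gamma k := by rw [← Gamma_add_one hk0.ne', Gamma_nat_eq_factorial]
  have hG : 0 < Gamma (k:ℝ) := Gamma_pos_of_pos hk0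
  rw [div_le_iff₀ (by positivity), hf]
  refine h.trans (le_of_eq ?_)
  rw [mul_rpow hk0.le hG.le, rpow_sub hk0, rpow_sub hG]
  have := (rpow_pos_of_pos hG β).ne'
  simp
  field_simp

lemma ratio_ge (β : ℝ) (hβ : β ∈ Ioo (0:ℝ) 1) (k : ℕ) :
    ((k:ℝ) + 1) ^ (β - 1) ≤ Gamma (k + β) / k.factorial := by
  have hk0 : (0:ℝ) ≤ k := by positivity
  have hkb : (0:ℝ) < k + β := by linarith [hβ.1]
  have h := Gamma_mul_add_mul_le_rpow_Gamma_mul_rpow_Gamma (s := k + β) (t := k + β + 1) (a := β) (b := 1 - β)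
    hkb (by positivity) hβ.1 (by linarith [hβ.2]) (by ring)
  rw [show β * ((k:ℝ) + β) + (1 - β) * (k + β + 1) = k + 1 by ring, Gamma_nat_eq_factorial,
    Gamma_add_one hkb.ne'] at h
  have hG : 0 < Gamma (k + β) := Gamma_pos_of_pos hkb
  have h1 : (k + β) ^ (1 - β) ≤ ((k:ℝ) + 1) ^ (1 - β) :=
    rpow_le_rpow hkb.le (by linarith [hβ.2]) (by linarith [hβ.2])
  have h2 : Gamma (k + β) ^ β * ((k + β) * Gamma (k + β)) ^ (1 - β) = Gamma (k + β) * (k + β) ^ (1 - β) := by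
    rw [mul_rpow hkb.le hG.le, rpow_sub hG]
    have := (rpow_pos_of_pos hG β).ne'
    simp
    field_simp
  rw [h2] at h
  rw [le_div_iff₀ (by positivity), show β - 1 = -(1 - β) by ring, rpow_neg (by positivity),
    inv_mul_le_iff₀ (by positivity)]
  nlinarith [mul_le_mul_of_nonneg_left h1 hG.le]

lemma cc_neg_nonneg (β : ℝ) (hβ : 0 < β) (k : ℕ) : 0 ≤ cc (-β) k := by
  rw [cc_neg_gamma β hβ]
  have := Gamma_pos_of_pos hβ
  have := Gamma_pos_of_pos (show 0 < k + β by positivity)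
  positivity

lemma cc_succ_eq (α : ℝ) (m : ℕ) : cc α (m+1) = -(α / (m+1)) * cc (-(1-α)) m := by
  induction m with
  | zero => simp [cc_succ, cc_zero]
  | succ m ih =>
    rw [cc_succ, ih, cc_succ]
    push_cast
    field_simp
    ring

lemma cc_sum (α : ℝ) (m : ℕ) : ∑ j ∈ Finset.range (m+1), cc α j = cc (-(1-α)) m := by
  induction m with
  | zero => simp [cc_zero]
  | succ m ih =>
    rw [Finset.sum_range_succ, ih, cc_succ_eq, cc_succ]
    field_simp
    ring

lemma cc_summable (α : ℝ) (hα : α ∈ Ioo (0:ℝ) 1) : Summable (fun j => ‖cc α j‖) := by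
  rw [← summable_nat_add_iff 1]
  refine summable_of_sum_range_le (c := 1) (fun _ => norm_nonneg _) fun m => ?_
  have h : ∀ j, ‖cc α (j+1)‖ = - cc α (j+1) := by
    intro j
    rw [Real.norm_of_nonpos]
    rw [cc_succ_eq]
    have := cc_neg_nonneg (1-α) (by linarith [hα.2]) j
    have := hα.1
    have : 0 ≤ (α / (j+1)) * cc (-(1-α)) j := by positivity
    linarith
  simp_rw [h]
  have h2 := cc_sum α m
  rw [Finset.sum_range_succ', cc_zero] at h2
  have := cc_neg_nonneg (1-α) (by linarith [hα.2]) m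
  rw [Finset.sum_neg_distrib]
  linarith

lemma cc_hasSum (α : ℝ) (hα : α ∈ Ioo (0:ℝ) 1) : HasSum (cc α) 0 := by
  have hs : Summable (cc α) := (cc_summable α hα).of_norm
  have h1 := (hs.hasSum.tendsto_sum_nat).comp (Filter.tendsto_add_atTop_nat 1)
  have h2 : Filter.Tendsto (fun m => cc (-(1-α)) m) Filter.atTop (nhds 0) := by
    have hb : (1 - α) ∈ Ioo (0:ℝ) 1 := ⟨by linarith [hα.2], by linarith [hα.1]⟩
    have h3 : Filter.Tendsto (fun m : ℕ => (Gamma (1-α))⁻¹ * (m:ℝ) ^ (-α)) Filter.atTop (nhds 0) := by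
      have := ((tendsto_rpow_neg_atTop hα.1).comp tendsto_natCast_atTop_atTop).const_mul (Gamma (1-α))⁻¹
      simpa using this
    refine squeeze_zero' (Filter.Eventually.of_forall fun m => cc_neg_nonneg _ hb.1 m) ?_ h3
    filter_upwards [Filter.eventually_ge_atTop 1] with m hm
    rw [cc_neg_gamma _ hb.1]
    have := ratio_le _ hb m hm
    rw [show 1 - α - 1 = -α by ring] at this
    have h5 := Gamma_pos_of_pos hb.1
    gcongr
  have h3 : ((fun n => ∑ i ∈ Finset.range n, cc α i) ∘ fun a => a + 1) = fun m => cc (-(1-α)) m := by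
    funext m; exact cc_sum α m
  rw [h3] at h1
  have := tendsto_nhds_unique h1 h2
  rw [← this]; exact hs.hasSum

def EE (α τ : ℝ) : ℝ := if 0 < τ then (Gamma α)⁻¹ * τ ^ (α - 1) - cc (-α) (⌈τ⌉₊ - 1) else 0

lemma EE_meas (α : ℝ) : Measurable (EE α) := by
  unfold EE
  refine Measurable.ite measurableSet_Ioi ?_ measurable_const
  refine Measurable.sub (by fun_prop) ?_
  exact (measurable_from_nat (f := fun k => cc (-α) (k - 1))).comp Nat.measurable_ceil

lemma EE_bound1 (α : ℝ) (hα : α ∈ Ioo (0:ℝ) 1) (τ : ℝ) (h0 : 0 < τ) (h1 : τ ≤ 1) :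
    ‖EE α τ‖ ≤ (Gamma α)⁻¹ * τ ^ (α - 1) + 1 := by
  have hc : ⌈τ⌉₊ = 1 := by
    rw [Nat.ceil_eq_iff (by norm_num)]; simp [h0, h1]
  have hG := Gamma_pos_of_pos hα.1
  have : 0 ≤ (Gamma α)⁻¹ * τ ^ (α - 1) := by positivity
  simp only [EE, h0, if_true, hc, cc_zero, Nat.sub_self]
  rw [Real.norm_eq_abs, abs_le]
  constructor <;> linarith

lemma EE_bound2 (α : ℝ) (hα : α ∈ Ioo (0:ℝ) 1) (τ : ℝ) (h1 : 1 < τ) :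
    ‖EE α τ‖ ≤ (Gamma α)⁻¹ * (2:ℝ)⁻¹ ^ (α - 1) * τ ^ (α - 2) := by
  have h0 : 0 < τ := by linarith
  have hG := Gamma_pos_of_pos hα.1
  obtain ⟨k, hk⟩ : ∃ k, ⌈τ⌉₊ = k + 1 :=
    ⟨⌈τ⌉₊ - 1, by have := Nat.ceil_pos.2 h0; omega⟩
  have hk2 := (Nat.ceil_eq_iff (Nat.succ_ne_zero k)).1 hk
  rw [Nat.succ_eq_add_one, Nat.add_sub_cancel] at hk2
  push_cast at hk2
  have hk1 : 1 ≤ k := by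
    by_contra h
    have : k = 0 := by omega
    subst this
    norm_num at hk2
    linarith
  have hk1' : (1:ℝ) ≤ k := by exact_mod_cast hk1
  have hk0 : (0:ℝ) < k := by linarith
  have a1 := ratio_le α hα k hk1
  have a2 := ratio_ge α hα k
  have a3 : τ ^ (α - 1) ≤ (k:ℝ) ^ (α - 1) :=
    rpow_le_rpow_of_nonpos hk0 hk2.1.le (by linarith [hα.2])
  have a4 : ((k:ℝ) + 1) ^ (α - 1) ≤ τ ^ (α - 1) :=
    rpow_le_rpow_of_nonpos h0 hk2.2 (by linarith [hα.2])
  have e : EE α τ = (Gamma α)⁻¹ * (τ ^ (α - 1) - Gamma (k + α) / k.factorial) := by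
    simp only [EE, h0, if_true, hk, Nat.add_sub_cancel]
    rw [cc_neg_gamma α hα.1]; ring
  rw [e, norm_mul, Real.norm_of_nonneg (by positivity : 0 ≤ (Gamma α)⁻¹), mul_assoc]
  refine mul_le_mul_of_nonneg_left ?_ (by positivity)
  have a5 : ‖τ ^ (α - 1) - Gamma (k + α) / k.factorial‖ ≤ (k:ℝ) ^ (α - 1) - ((k:ℝ) + 1) ^ (α - 1) := by
    rw [Real.norm_eq_abs, abs_le]; constructor <;> linarith
  refine a5.trans ?_
  -- (k+1)^(α-1) ≥ k^(α-1) * (k/(k+1))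
  have a6 : (k:ℝ) ^ (α - 1) * (k / (k + 1)) ≤ ((k:ℝ) + 1) ^ (α - 1) := by
    have hx : (k:ℝ) / (k+1) ≤ ((k:ℝ) / (k+1)) ^ (1 - α) := by
      have := rpow_le_rpow_of_exponent_ge (x := (k:ℝ)/(k+1)) (by positivity)
        (by rw [div_le_one (by positivity)]; linarith) (show 1 - α ≤ 1 by linarith [hα.1])
      simpa using this
    calc (k:ℝ) ^ (α - 1) * (k / (k + 1)) ≤ (k:ℝ) ^ (α - 1) * ((k:ℝ) / (k+1)) ^ (1 - α) := by gcongr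
      _ = ((k:ℝ) + 1) ^ (α - 1) := by
        rw [div_rpow hk0.le (by positivity), show α - 1 = -(1 - α) by ring, rpow_neg hk0.le,
          rpow_neg (by positivity)]
        have := (rpow_pos_of_pos hk0 (1 - α)).ne'
        field_simp
  have a7 : (k:ℝ) ^ (α - 1) - ((k:ℝ) + 1) ^ (α - 1) ≤ (k:ℝ) ^ (α - 1) * (1 / (k+1)) := by
    have : (k:ℝ) ^ (α - 1) * (1 / (k+1)) = (k:ℝ) ^ (α - 1) - (k:ℝ) ^ (α - 1) * (k / (k + 1)) := by
      field_simp; ring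
    linarith
  refine a7.trans ?_
  have a8 : (k:ℝ) ^ (α - 1) ≤ (2⁻¹ * τ) ^ (α - 1) :=
    rpow_le_rpow_of_nonpos (by positivity) (by linarith [hk2.2]) (by linarith [hα.2])
  have a9 : (2⁻¹:ℝ) ^ (α - 1) * τ ^ (α - 2) = (2⁻¹ * τ) ^ (α - 1) * (1 / τ) := by
    rw [mul_rpow (by norm_num) h0.le, show α - 2 = (α - 1) - 1 by ring, rpow_sub_one h0.ne' (α - 1)]
    ring
  rw [a9]
  have : 1 / ((k:ℝ) + 1) ≤ 1 / τ := one_div_le_one_div_of_le h0 hk2.2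
  gcongr

lemma EE_int (α : ℝ) (hα : α ∈ Ioo (0:ℝ) 1) : Integrable (EE α) := by
  have i1 : IntegrableOn (fun τ : ℝ => (Gamma α)⁻¹ * τ ^ (α - 1) + 1) (Ioc 0 1) := by
    have := (intervalIntegral.intervalIntegrable_rpow' (a := 0) (b := 1) (r := α - 1)
      (by linarith [hα.1]))
    have := ((this.const_mul (Gamma α)⁻¹).add (intervalIntegrable_const (c := (1:ℝ))))
    rwa [intervalIntegrable_iff_integrableOn_Ioc_of_le zero_le_one] at this
  have i2 : IntegrableOn (fun τ : ℝ => (Gamma α)⁻¹ * (2:ℝ)⁻¹ ^ (α - 1) * τ ^ (α - 2)) (Ioi 1) :=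
    (integrableOn_Ioi_rpow_of_lt (by linarith [hα.2]) one_pos).const_mul _
  refine Integrable.mono' ((i1.integrable_indicator measurableSet_Ioc).add
    (i2.integrable_indicator measurableSet_Ioi)) (EE_meas α).aestronglyMeasurable
    (Filter.Eventually.of_forall fun τ => ?_)
  rcases le_or_gt τ 0 with h0 | h0
  · have : ¬ (0 < τ) := not_lt.2 h0
    have : ¬ (1 < τ) := by linarith
    simp [EE, Set.indicator, *]
  · rcases le_or_gt τ 1 with h1 | h1
    · have := EE_bound1 α hα τ h0 h1
      simpa [Set.indicator, h0, h1, not_lt.2 h1] using this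
    · have := EE_bound2 α hα τ h1
      simpa [Set.indicator, h0, h1, not_le.2 h1] using this

lemma pker_eq_s8 (α : ℝ) (τ : ℝ) :
    ∑' j : ℕ, cc α j * EE α (τ - j) = pker α τ - (Ioc (0:ℝ) 1).indicator (fun _ => 1) τ := by
  rw [tsum_eq_sum (s := Finset.range ⌈τ⌉₊)]
  swap
  · intro j hj
    have : τ ≤ j := by simpa using hj
    simp [EE, not_lt.2 this]
  rcases le_or_gt τ 0 with h0 | h0
  · have : ⌈τ⌉₊ = 0 := Nat.ceil_eq_zero.2 h0
    simp [pker, this, Set.indicator, not_lt.2 h0]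
  obtain ⟨m, hm⟩ : ∃ k, ⌈τ⌉₊ = k + 1 :=
    ⟨⌈τ⌉₊ - 1, by have := Nat.ceil_pos.2 h0; omega⟩
  have hi : (Ioc (0:ℝ) 1).indicator (fun _ => (1:ℝ)) τ = if m = 0 then 1 else 0 := by
    have : τ ≤ 1 ↔ m = 0 := by
      have : τ ≤ 1 ↔ ⌈τ⌉₊ ≤ 1 := by simp
      rw [this, hm]; omega
    simp [Set.indicator, h0, this]
  rw [hi, ← cc_conv α m, pker, hm, Finset.mul_sum, ← Finset.sum_sub_distrib]
  refine Finset.sum_congr rfl fun j hj => ?_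
  have hj' : j < ⌈τ⌉₊ := by rw [hm]; exact Finset.mem_range.1 hj
  have hj2 : (j:ℝ) < τ := Nat.lt_ceil.1 hj'
  have hc : ⌈τ - j⌉₊ - 1 = m - j := by
    rw [Nat.ceil_sub_natCast, hm]; omega
  simp only [EE, sub_pos, hj2, if_true, hc]
  simp only [cc]
  ring

lemma pker_main (α : ℝ) (hα : α ∈ Ioo (0:ℝ) 1) :
    Integrable (pker α) ∧ ∫ τ, pker α τ = 1 := by
  have hE := EE_int α hα
  have hF : ∀ j : ℕ, Integrable (fun τ => cc α j * EE α (τ - j)) := fun j =>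
    (hE.comp_sub_right (j:ℝ)).const_mul _
  have hI : ∀ j : ℕ, ∫ τ, ‖cc α j * EE α (τ - j)‖ = ‖cc α j‖ * ∫ τ, ‖EE α τ‖ := by
    intro j
    simp_rw [norm_mul]
    rw [integral_const_mul, integral_sub_right_eq_self (fun τ => ‖EE α τ‖)]
  have hS : Summable fun j : ℕ => ∫ τ, ‖cc α j * EE α (τ - j)‖ := by
    simp_rw [hI]; exact (cc_summable α hα).mul_right _
  have hsum := hasSum_integral_of_summable_integral_norm hF hS
  have hint : Integrable (fun τ => ∑' j : ℕ, cc α j * EE α (τ - j)) := by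
    refine ⟨?_, ?_⟩
    · refine (Measurable.aestronglyMeasurable ?_)
      refine Measurable.tsum fun j => ?_
      have := EE_meas α
      fun_prop
    · rw [HasFiniteIntegral]
      calc ∫⁻ τ, ‖∑' j : ℕ, cc α j * EE α (τ - j)‖ₑ
          ≤ ∫⁻ τ, ∑' j : ℕ, ‖cc α j * EE α (τ - j)‖ₑ := lintegral_mono fun τ => enorm_tsum_le_tsum_enorm
        _ = ∑' j : ℕ, ∫⁻ τ, ‖cc α j * EE α (τ - j)‖ₑ :=
            lintegral_tsum fun j => (hF j).1.enorm
        _ = ∑' j : ℕ, ENNReal.ofReal (∫ τ, ‖cc α j * EE α (τ - j)‖) := by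
            congr 1; funext j; rw [ofReal_integral_norm_eq_lintegral_enorm (hF j)]
        _ < ⊤ := hS.tsum_ofReal_lt_top
  have h1 : Integrable ((Ioc (0:ℝ) 1).indicator (fun _ => (1:ℝ))) :=
    (integrableOn_const (by simp)).integrable_indicator measurableSet_Ioc
  have h2 : ∫ τ, (Ioc (0:ℝ) 1).indicator (fun _ => (1:ℝ)) τ = 1 := by
    rw [integral_indicator measurableSet_Ioc]; simp
  have hp : pker α = fun τ => (∑' j : ℕ, cc α j * EE α (τ - j)) + (Ioc (0:ℝ) 1).indicator (fun _ => (1:ℝ)) τ := by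
    funext τ; rw [pker_eq_s8]; ring
  have h0 : ∫ τ, ∑' j : ℕ, cc α j * EE α (τ - j) = 0 := by
    refine hsum.unique ?_
    have : (fun j : ℕ => ∫ τ, cc α j * EE α (τ - j)) = fun j => cc α j * ∫ τ, EE α τ := by
      funext j
      rw [integral_const_mul, integral_sub_right_eq_self (EE α)]
    rw [this]
    simpa using (cc_hasSum α hα).mul_right (∫ τ, EE α τ)
  constructor
  · rw [hp]; exact hint.add h1
  · rw [hp, integral_add hint h1, h0, h2, zero_add]

lemma pker_neg (α τ : ℝ) (h : τ ≤ 0) : pker α τ = 0 := by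
  simp [pker, Nat.ceil_eq_zero.2 h]

lemma pker_tail (α : ℝ) (hα : α ∈ Ioo (0:ℝ) 1) (η : ℝ) (hη : 0 < η) :
    ∃ R > (0:ℝ), ∫ τ in Ioi R, ‖pker α τ‖ ≤ η := by
  obtain ⟨hp, -⟩ := pker_main α hα
  have h := tendsto_setIntegral_of_antitone (μ := volume) (f := fun τ => ‖pker α τ‖)
    (s := fun n : ℕ => Ioi (n:ℝ)) (fun _ => measurableSet_Ioi)
    (fun a b hab => Ioi_subset_Ioi (by exact_mod_cast hab)) ⟨0, hp.norm.integrableOn⟩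
  have he : (⋂ n : ℕ, Ioi (n:ℝ)) = ∅ := by
    ext x
    simp only [mem_iInter, mem_Ioi, mem_empty_iff_false, iff_false, not_forall, not_lt]
    exact exists_nat_ge x
  rw [he, setIntegral_empty] at h
  obtain ⟨n, hn1, hn2⟩ := ((h.eventually (ge_mem_nhds hη)).and (Filter.eventually_ge_atTop 1)).exists
  exact ⟨n, by exact_mod_cast hn2, hn1⟩

theorem stmt8 (α T : ℝ) (hα : α ∈ Ioo (0:ℝ) 1) (hT : 0 < T) (n : ℕ)
    (W : Set (ℝ → Evec n))
    (hWc : ∀ φ ∈ W, ContinuousOn φ (Icc (0:ℝ) T))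
    (hW0 : ∀ φ ∈ W, φ 0 = 0)
    (A : ℝ) (hWb : ∀ φ ∈ W, ∀ t ∈ Icc (0:ℝ) T, ‖φ t‖ ≤ A)
    (hWe : ∀ ε > (0:ℝ), ∃ δ > (0:ℝ), ∀ φ ∈ W, ∀ t ∈ Icc (0:ℝ) T, ∀ τ ∈ Icc (0:ℝ) T,
      |t - τ| ≤ δ → ‖φ t - φ τ‖ ≤ ε) :
    ∀ ε > (0:ℝ), ∃ hstar > (0:ℝ), ∀ h ∈ Ioc (0:ℝ) hstar, ∀ φ ∈ W, ∀ t ∈ Icc (0:ℝ) T,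
      ‖(∫ τ in (0:ℝ)..(t / h), pker α τ • φ (t - τ * h)) - φ t‖ ≤ ε := by
  intro ε hε
  obtain ⟨hp, hp1⟩ := pker_main α hα
  set M := ∫ τ, ‖pker α τ‖ with hM
  have hM0 : 0 ≤ M := integral_nonneg fun _ => norm_nonneg _
  obtain ⟨R, hR, htail⟩ := pker_tail α hα (ε / (4 * (|A| + 1))) (by positivity)
  obtain ⟨δ, hδ, hW⟩ := hWe (ε / (2 * (M + 1))) (by positivity)
  set η := ε / (2 * (M + 1)) with hη
  have hη0 : 0 < η := by positivity
  refine ⟨δ / R, by positivity, fun h hh φ hφ t ht => ?_⟩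
  have hh0 : 0 < h := hh.1
  have hhR : h * R ≤ δ := (le_div_iff₀ hR).1 hh.2
  have hth : 0 ≤ t / h := div_nonneg ht.1 hh0.le
  have hmem : ∀ τ ∈ Icc 0 (t / h), t - τ * h ∈ Icc (0:ℝ) T := by
    intro τ hτ
    have h1 : τ * h ≤ t := (le_div_iff₀ hh0).1 hτ.2
    have h2 : 0 ≤ τ * h := mul_nonneg hτ.1 hh0.le
    exact ⟨by linarith, by linarith [ht.2]⟩
  have hAt : ∀ s ∈ Icc (0:ℝ) T, ‖φ s‖ ≤ |A| := fun s hs => (hWb φ hφ s hs).trans (le_abs_self A)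
  have hi1 : IntegrableOn (fun τ => pker α τ • φ (t - τ * h)) (Ioc 0 (t / h)) := by
    have hc : ContinuousOn (fun τ => φ (t - τ * h)) (Ioc 0 (t / h)) :=
      (hWc φ hφ).comp (by fun_prop) fun τ hτ => hmem τ ⟨hτ.1.le, hτ.2⟩
    refine Integrable.smul_bdd (φ := pker α) (f := fun τ => φ (t - τ * h)) hp.integrableOn |A|
      (hc.aestronglyMeasurable measurableSet_Ioc) ?_
    filter_upwards [ae_restrict_mem measurableSet_Ioc] with τ hτ
    exact hAt _ (hmem τ ⟨hτ.1.le, hτ.2⟩)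
  have e1 : (∫ τ in (0:ℝ)..(t / h), pker α τ • φ (t - τ * h)) - φ t =
      ∫ τ, ((Ioc 0 (t / h)).indicator (fun τ => pker α τ • φ (t - τ * h)) τ - pker α τ • φ t) := by
    rw [integral_sub (hi1.integrable_indicator measurableSet_Ioc) (hp.smul_const _),
      integral_indicator measurableSet_Ioc, intervalIntegral.integral_of_le hth,
      integral_smul_const, hp1, one_smul]
  rw [e1]
  have hgi : Integrable ((Ioi R).indicator (fun τ => ‖pker α τ‖)) :=
    hp.norm.integrableOn.integrable_indicator measurableSet_Ioi
  have hb : ∀ τ, ‖(Ioc 0 (t / h)).indicator (fun τ => pker α τ • φ (t - τ * h)) τ - pker α τ • φ t‖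
      ≤ η * ‖pker α τ‖ + 2 * |A| * (Ioi R).indicator (fun τ => ‖pker α τ‖) τ := by
    intro τ
    rcases le_or_gt τ 0 with h0 | h0
    · simp [Set.indicator, pker_neg α τ h0]
    have hn := norm_nonneg (pker α τ)
    have key : ∀ v : Evec n, ‖v‖ ≤ 2 * |A| → (τ ≤ R → ‖v‖ ≤ η) → ‖pker α τ • v‖ ≤
        η * ‖pker α τ‖ + 2 * |A| * (Ioi R).indicator (fun τ => ‖pker α τ‖) τ := by
      intro v hv1 hv2
      rw [norm_smul]
      rcases le_or_gt τ R with hτ | hτ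
      · have := hv2 hτ
        simp only [Set.indicator, mem_Ioi, not_lt.2 hτ, if_false]
        nlinarith
      · simp only [Set.indicator, mem_Ioi, hτ, if_true]
        nlinarith
    have hτδ : τ ≤ R → τ * h ≤ δ := fun hτ => by nlinarith
    have hA0 := abs_nonneg A
    by_cases hτ : τ ≤ t / h
    · rw [Set.indicator_of_mem (show τ ∈ Ioc 0 (t / h) from ⟨h0, hτ⟩), ← smul_sub]
      have hm := hmem τ ⟨h0.le, hτ⟩
      refine key _ ?_ fun hτR => hW φ hφ _ hm _ ht ?_
      · linarith [norm_sub_le (φ (t - τ * h)) (φ t), hAt _ hm, hAt _ ht]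
      · rw [show t - τ * h - t = -(τ * h) by ring, abs_neg, abs_of_nonneg (by positivity)]
        exact hτδ hτR
    · rw [Set.indicator_of_notMem (fun hx => hτ hx.2), zero_sub, norm_neg]
      refine key _ (by linarith [hAt _ ht]) fun hτR => ?_
      have h3 : t < τ * h := (div_lt_iff₀ hh0).1 (not_le.1 hτ)
      have := hW φ hφ t ht 0 ⟨le_rfl, hT.le⟩ (by
        rw [sub_zero, abs_of_nonneg ht.1]; linarith [hτδ hτR])
      rwa [hW0 φ hφ, sub_zero] at this
  refine (norm_integral_le_of_norm_le ((hp.norm.const_mul η).add (hgi.const_mul (2 * |A|)))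
    (Filter.Eventually.of_forall hb)).trans ?_
  have e2 : ∫ τ, (η * ‖pker α τ‖ + 2 * |A| * (Ioi R).indicator (fun τ => ‖pker α τ‖) τ) =
      η * M + 2 * |A| * ∫ τ in Ioi R, ‖pker α τ‖ := by
    rw [integral_add (hp.norm.const_mul η) (hgi.const_mul (2 * |A|)), integral_const_mul,
      integral_const_mul, integral_indicator measurableSet_Ioi]
  refine (le_of_eq e2).trans ?_
  have b1 : η * M ≤ ε / 2 := by
    rw [hη, div_mul_eq_mul_div, div_le_div_iff₀ (by positivity) (by norm_num)]
    nlinarith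
  have b2 : 2 * |A| * ∫ τ in Ioi R, ‖pker α τ‖ ≤ ε / 2 := by
    calc 2 * |A| * ∫ τ in Ioi R, ‖pker α τ‖ ≤ 2 * |A| * (ε / (4 * (|A| + 1))) := by gcongr
      _ ≤ ε / 2 := by
        rw [← mul_div_assoc, div_le_div_iff₀ (by positivity) (by norm_num)]
        nlinarith [abs_nonneg A]
  linarith
end
end

section
/- Let f : [0,T]×ℝⁿ → ℝⁿ be measurable in t, locally Lipschitz in x uniformly in t, and satisfy ‖f(t,x)‖ ≤ (1+‖x‖)c_f. Then for any initial value x₀ ∈ B(R₀) there exists a unique solution x(·) ∈ {x₀} + I^α(L^∞) of the Caputo fractional Cauchy problem (^C D^α x)(t) = f(t,x(t)) a.e., x(0) = x₀. Moreover there exist R > 0 and H > 0, independent of x₀ ∈ B(R₀), such that ‖x(t)‖ ≤ R and ‖x(t) − x(τ)‖ ≤ H|t−τ|^α for all t,τ ∈ [0,T]. -/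
open MeasureTheory Set Real RealInnerProductSpace

noncomputable section

theorem aux_beta {α a : ℝ} (h0 : 0 < α) (h1 : α < 1) (ha : 0 < a) :
    ∫ x in (0:ℝ)..a, x ^ (α - 1) * (a - x) ^ (-α) = Real.Gamma α * Real.Gamma (1 - α) := by
  have h := Complex.betaIntegral_scaled (α : ℂ) (1 - α : ℂ) ha
  have h2 := Complex.Gamma_mul_Gamma_eq_betaIntegral (s := (α:ℂ)) (t := (1 - α : ℂ))
    (by simpa using h0) (by simpa using h1)
  have e1 : (α : ℂ) + (1 - α) = 1 := by ring
  rw [e1] at h h2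
  simp only [sub_self, Complex.cpow_zero, one_mul, Complex.Gamma_one] at h h2
  rw [← h2] at h
  have e2 : (1 - α : ℂ) = ((1 - α : ℝ) : ℂ) := by push_cast; rfl
  have h3 : ∫ x in (0:ℝ)..a, (x : ℂ) ^ ((α : ℂ) - 1) * ((a : ℂ) - x) ^ ((1 - α : ℂ) - 1)
      = ((∫ x in (0:ℝ)..a, x ^ (α - 1) * (a - x) ^ (-α) : ℝ) : ℂ) := by
    rw [← intervalIntegral.integral_ofReal]
    apply intervalIntegral.integral_congr
    intro x hx
    rw [uIcc_of_le ha.le] at hx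
    simp only
    rw [Complex.ofReal_mul, Complex.ofReal_cpow hx.1, Complex.ofReal_cpow (by linarith [hx.2])]
    push_cast
    congr 2
    ring
  rw [h3, e2, Complex.Gamma_ofReal, Complex.Gamma_ofReal] at h
  exact_mod_cast h

theorem aux_beta2 {α r s : ℝ} (h0 : 0 < α) (h1 : α < 1) (ha : r < s) :
    ∫ x in r..s, (s - x) ^ (-α) * (x - r) ^ (α - 1) = Real.Gamma α * Real.Gamma (1 - α) := by
  have := intervalIntegral.integral_comp_sub_right (a := r) (b := s)
    (fun x => x ^ (α - 1) * ((s - r) - x) ^ (-α)) r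
  rw [sub_self, aux_beta h0 h1 (by linarith)] at this
  rw [← this]
  congr 1; ext x; rw [mul_comm]; congr 2; ring

theorem aux_beta2_int {α r s : ℝ} (h0 : 0 < α) (h1 : α < 1) (ha : r < s) :
    IntegrableOn (fun x => (s - x) ^ (-α) * (x - r) ^ (α - 1)) (Ioo r s) := by
  by_contra h
  have := aux_beta2 h0 h1 ha
  rw [intervalIntegral.integral_of_le ha.le, integral_Ioc_eq_integral_Ioo, integral_undef h] at this
  have h2 := mul_pos (Real.Gamma_pos_of_pos h0) (Real.Gamma_pos_of_pos (sub_pos.2 h1))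
  linarith

theorem aux_ker_int {α t : ℝ} (h0 : 0 < α) (a b : ℝ) :
    IntervalIntegrable (fun τ => (t - τ) ^ (α - 1)) volume a b := by
  have h : IntervalIntegrable (fun τ : ℝ => τ ^ (α - 1)) volume (t - a) (t - b) :=
    intervalIntegral.intervalIntegrable_rpow' (by linarith)
  have := h.comp_sub_left t
  simpa using this

theorem aux_int {n : ℕ} {α t C : ℝ} (h0 : 0 < α) {φ : ℝ → Evec n} (hm : Measurable φ)
    (hb : ∀ t, ‖φ t‖ ≤ C) (a b : ℝ) :
    IntervalIntegrable (fun τ => ((t - τ) ^ (α - 1) : ℝ) • φ τ) volume a b := by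
  have hk := aux_ker_int (t := t) h0 a b
  refine (hk.norm.const_mul C).mono_fun ?_ ?_
  · apply Measurable.aestronglyMeasurable
    have h : Measurable fun τ : ℝ => (t - τ) ^ (α - 1) := by fun_prop
    exact h.smul hm
  · refine Filter.Eventually.of_forall fun x => ?_
    simp only [norm_smul, norm_mul, norm_norm]
    rw [mul_comm]
    gcongr
    exact (hb x).trans (le_abs_self _)

/-- Semigroup property. -/
theorem aux_semi {n : ℕ} {α s C : ℝ} (h0 : 0 < α) (h1 : α < 1) {φ : ℝ → Evec n}
    (hm : Measurable φ) (hb : ∀ t, ‖φ t‖ ≤ C) (hs : 0 ≤ s) :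
    ∫ τ in (0:ℝ)..s, ((s - τ) ^ (-α) : ℝ) • RLint α φ τ
      = Real.Gamma (1 - α) • ∫ τ in (0:ℝ)..s, φ τ := by
  have hC : 0 ≤ C := (norm_nonneg _).trans (hb 0)
  have hG := Real.Gamma_pos_of_pos h0
  have hG1 := Real.Gamma_pos_of_pos (sub_pos.2 h1)
  set S : Set (ℝ × ℝ) := {p | 0 < p.2 ∧ p.2 < p.1 ∧ p.1 < s} with hS
  have hSm : MeasurableSet S := by
    have : S = {p : ℝ × ℝ | 0 < p.2} ∩ ({p | p.2 < p.1} ∩ {p | p.1 < s}) := by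
      ext p; simp [hS]
    rw [this]
    exact (measurableSet_lt measurable_const measurable_snd).inter
      ((measurableSet_lt measurable_snd measurable_fst).inter
        (measurableSet_lt measurable_fst measurable_const))
  set K : ℝ × ℝ → ℝ := fun p => (s - p.1) ^ (-α) * (p.1 - p.2) ^ (α - 1) with hK
  have hKm : Measurable K := by fun_prop
  set F : ℝ × ℝ → Evec n := S.indicator (fun p => K p • φ p.2) with hF
  have hFm : Measurable F := (hKm.smul (hm.comp measurable_snd)).indicator hSm
  have hFr : ∀ r, (fun τ => F (τ, r)) =
      (Ioo 0 s).indicator (fun r => (Ioo r s).indicator (fun τ => K (τ, r) • φ r)) r := by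
    intro r; ext1 τ
    by_cases h : 0 < r ∧ r < τ ∧ τ < s
    · rw [hF, indicator_of_mem (show (τ, r) ∈ S from h),
        indicator_of_mem (show r ∈ Ioo 0 s from ⟨h.1, h.2.1.trans h.2.2⟩),
        indicator_of_mem (show τ ∈ Ioo r s from h.2)]
    · rw [hF, indicator_of_notMem (show (τ, r) ∉ S from h)]
      by_cases hr : r ∈ Ioo 0 s
      · rw [indicator_of_mem hr, indicator_of_notMem]
        intro h'; exact h ⟨hr.1, h'⟩
      · rw [indicator_of_notMem hr]; rfl
  have hFt : ∀ τ, (fun r => F (τ, r)) =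
      (Ioo 0 s).indicator (fun τ => (Ioo 0 τ).indicator (fun r => K (τ, r) • φ r)) τ := by
    intro τ; ext1 r
    by_cases h : 0 < r ∧ r < τ ∧ τ < s
    · rw [hF, indicator_of_mem (show (τ, r) ∈ S from h),
        indicator_of_mem (show τ ∈ Ioo 0 s from ⟨h.1.trans h.2.1, h.2.2⟩),
        indicator_of_mem (show r ∈ Ioo 0 τ from ⟨h.1, h.2.1⟩)]
    · rw [hF, indicator_of_notMem (show (τ, r) ∉ S from h)]
      by_cases hr : τ ∈ Ioo 0 s
      · rw [indicator_of_mem hr, indicator_of_notMem]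
        intro h'; exact h ⟨h'.1, h'.2, hr.2⟩
      · rw [indicator_of_notMem hr]; rfl
  have hKr : ∀ r ∈ Ioo 0 s, ∫ τ in Ioo r s, K (τ, r) = Real.Gamma α * Real.Gamma (1 - α) := by
    intro r hr
    rw [← aux_beta2 h0 h1 hr.2, intervalIntegral.integral_of_le hr.2.le,
      integral_Ioc_eq_integral_Ioo]
  have hint : Integrable F (volume.prod volume) := by
    rw [integrable_prod_iff' hFm.aestronglyMeasurable]
    constructor
    · refine Filter.Eventually.of_forall fun r => ?_
      rw [hFr]
      by_cases hr : r ∈ Ioo 0 s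
      · rw [indicator_of_mem hr, integrable_indicator_iff measurableSet_Ioo]
        exact (aux_beta2_int h0 h1 hr.2).smul_const _
      · rw [indicator_of_notMem hr]; exact integrable_zero _ _ _
    · have : (fun r => ∫ τ, ‖F (τ, r)‖) =
          (Ioo 0 s).indicator (fun r => (Real.Gamma α * Real.Gamma (1 - α)) * ‖φ r‖) := by
        ext1 r
        have e := hFr r
        by_cases hr : r ∈ Ioo 0 s
        · rw [indicator_of_mem hr] at e ⊢
          have e' : (fun τ => ‖F (τ, r)‖) = (Ioo r s).indicator (fun τ => K (τ, r) * ‖φ r‖) := by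
            ext1 τ
            rw [show F (τ, r) = (fun τ => F (τ, r)) τ from rfl, e]
            by_cases hτ : τ ∈ Ioo r s
            · rw [indicator_of_mem hτ, indicator_of_mem hτ, norm_smul, Real.norm_of_nonneg]
              exact mul_nonneg (Real.rpow_nonneg (by linarith [hτ.2]) _)
                (Real.rpow_nonneg (by simpa using hτ.1.le) _)
            · rw [indicator_of_notMem hτ, indicator_of_notMem hτ, norm_zero]
          rw [e', integral_indicator measurableSet_Ioo, integral_mul_const, hKr r hr]
        · rw [indicator_of_notMem hr] at e ⊢
          simp only [funext_iff] at e
          simp [e]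
      rw [this, integrable_indicator_iff measurableSet_Ioo]
      refine Integrable.const_mul ?_ _
      refine Integrable.mono' (g := fun _ => C) ?_ hm.norm.aestronglyMeasurable
        (Filter.Eventually.of_forall fun x => by simpa using hb x)
      exact integrableOn_const (by simp)
  have hsw := integral_integral_swap (f := fun τ r => F (τ, r)) hint
  have e1 : ∫ τ, ∫ r, F (τ, r) = Real.Gamma α • ∫ τ in (0:ℝ)..s, ((s - τ) ^ (-α) : ℝ) • RLint α φ τ := by
    rw [intervalIntegral.integral_of_le hs, integral_Ioc_eq_integral_Ioo, ← integral_smul,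
      ← integral_indicator measurableSet_Ioo]
    congr 1; ext1 τ
    rw [hFt τ]
    by_cases hr : τ ∈ Ioo 0 s
    · rw [indicator_of_mem hr, indicator_of_mem hr, integral_indicator measurableSet_Ioo, RLint,
        smul_comm, smul_smul (Real.Gamma α), mul_inv_cancel₀ hG.ne', one_smul,
        intervalIntegral.integral_of_le hr.1.le, integral_Ioc_eq_integral_Ioo, ← integral_smul]
      simp only [hK, mul_smul]
    · rw [indicator_of_notMem hr, indicator_of_notMem hr]; simp
  have e2 : ∫ r, ∫ τ, F (τ, r) = (Real.Gamma α * Real.Gamma (1 - α)) • ∫ τ in (0:ℝ)..s, φ τ := by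
    rw [intervalIntegral.integral_of_le hs, integral_Ioc_eq_integral_Ioo, ← integral_smul,
      ← integral_indicator measurableSet_Ioo]
    congr 1; ext1 r
    rw [hFr r]
    by_cases hr : r ∈ Ioo 0 s
    · rw [indicator_of_mem hr, indicator_of_mem hr, integral_indicator measurableSet_Ioo,
        integral_smul_const, hKr r hr]
    · rw [indicator_of_notMem hr, indicator_of_notMem hr]; simp
  rw [e1, e2, mul_smul] at hsw
  exact smul_right_injective _ hG.ne' hsw

theorem aux_cap {n : ℕ} {α T C : ℝ} (h0 : 0 < α) (h1 : α < 1) (hT : 0 < T) {φ : ℝ → Evec n}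
    (hm : Measurable φ) (hb : ∀ t, ‖φ t‖ ≤ C) (x₀ : Evec n) (x : ℝ → Evec n)
    (hx : ∀ t ∈ Icc (0:ℝ) T, x t = x₀ + RLint α φ t) :
    ∀ᵐ t ∂volume.restrict (Icc (0:ℝ) T), CapDeriv α x t = φ t := by
  have hG1 := Real.Gamma_pos_of_pos (sub_pos.2 h1)
  have hloc : LocallyIntegrable φ volume := by
    intro t
    refine ⟨Ioo (t-1) (t+1), Ioo_mem_nhds (by linarith) (by linarith), ?_⟩
    refine Integrable.mono' (g := fun _ => C) ?_ hm.aestronglyMeasurable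
        (Filter.Eventually.of_forall fun x => by simpa using hb x)
    exact integrableOn_const (by simp)
  have hx0 : x 0 = x₀ := by rw [hx 0 ⟨le_rfl, hT.le⟩, RLint]; simp
  have hd := _root_.LocallyIntegrable.ae_hasDerivAt_integral hloc
  rw [Measure.restrict_congr_set Ioo_ae_eq_Icc.symm, ae_restrict_iff' measurableSet_Ioo]
  filter_upwards [hd] with t ht htI
  rw [CapDeriv, RLderiv]
  have hev : (fun s => (Real.Gamma (1 - α))⁻¹ • ∫ τ in (0:ℝ)..s, ((s - τ) ^ (-α) : ℝ) • (x τ - x 0))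
      =ᶠ[nhds t] fun s => ∫ τ in (0:ℝ)..s, φ τ := by
    filter_upwards [Ioo_mem_nhds htI.1 htI.2] with s hs
    have : ∫ τ in (0:ℝ)..s, ((s - τ) ^ (-α) : ℝ) • (x τ - x 0)
        = ∫ τ in (0:ℝ)..s, ((s - τ) ^ (-α) : ℝ) • RLint α φ τ := by
      apply intervalIntegral.integral_congr
      intro τ hτ
      rw [uIcc_of_le hs.1.le] at hτ
      simp only
      rw [hx τ ⟨hτ.1, hτ.2.trans hs.2.le⟩, hx0, add_sub_cancel_left]
    rw [this, aux_semi h0 h1 hm hb hs.1.le, smul_smul, inv_mul_cancel₀ hG1.ne', one_smul]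
  rw [hev.deriv_eq]
  exact (ht 0).deriv

theorem aux_exp {α μ t : ℝ} (h0 : 0 < α) (hμ : 0 < μ) (ht : 0 ≤ t) :
    IntervalIntegrable (fun τ => (t - τ) ^ (α - 1) * Real.exp (μ * τ)) volume 0 t ∧
    ∫ τ in (0:ℝ)..t, (t - τ) ^ (α - 1) * Real.exp (μ * τ)
      ≤ Real.exp (μ * t) * (Real.Gamma α * (1 / μ) ^ α) := by
  constructor
  · exact (aux_ker_int h0 0 t).mul_continuousOn (by fun_prop)
  · have h := Real.integral_rpow_mul_exp_neg_mul_Ioi h0 hμ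
    have hpos : 0 < Real.Gamma α := Real.Gamma_pos_of_pos h0
    have hint : IntegrableOn (fun s : ℝ => s ^ (α - 1) * Real.exp (-(μ * s))) (Ioi 0) := by
      by_contra hh
      rw [integral_undef hh] at h
      have : 0 < (1 / μ) ^ α * Real.Gamma α := by positivity
      linarith
    have e := intervalIntegral.integral_comp_sub_left (a := 0) (b := t)
      (fun s => s ^ (α - 1) * Real.exp (μ * (t - s))) t
    simp only [sub_sub_cancel, sub_zero, sub_self] at e
    rw [e, mul_comm (Real.Gamma α), ← h, intervalIntegral.integral_of_le ht,
      ← integral_const_mul]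
    have e3 : ∀ s : ℝ, s ^ (α - 1) * Real.exp (μ * (t - s)) =
        Real.exp (μ * t) * (s ^ (α - 1) * Real.exp (-(μ * s))) := by
      intro s
      rw [show μ * (t - s) = μ * t + -(μ * s) by ring, Real.exp_add]; ring
    simp only [e3]
    refine setIntegral_mono_set (hint.const_mul _) ?_ (Filter.Eventually.of_forall Ioc_subset_Ioi_self)
    filter_upwards [ae_restrict_mem measurableSet_Ioi] with s hs
    exact mul_nonneg (Real.exp_pos _).le (mul_nonneg (Real.rpow_nonneg (le_of_lt hs) _) (Real.exp_pos _).le)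

theorem aux_est {n : ℕ} {α μ t A : ℝ} (h0 : 0 < α) (hμ : 0 < μ) (ht : 0 ≤ t)
    {φ : ℝ → Evec n} (hA : 0 ≤ A)
    (hb : ∀ᵐ τ, τ ∈ Ioc 0 t → ‖φ τ‖ ≤ A * Real.exp (μ * τ)) :
    ‖RLint α φ t‖ ≤ A * (1 / μ) ^ α * Real.exp (μ * t) := by
  have hG := Real.Gamma_pos_of_pos h0
  obtain ⟨hi, hle⟩ := aux_exp h0 hμ ht
  have h1 : ‖∫ τ in (0:ℝ)..t, ((t - τ) ^ (α - 1) : ℝ) • φ τ‖ ≤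
      ∫ τ in (0:ℝ)..t, A * ((t - τ) ^ (α - 1) * Real.exp (μ * τ)) := by
    refine intervalIntegral.norm_integral_le_of_norm_le ht ?_ (hi.const_mul _)
    filter_upwards [hb] with τ h hτ
    rw [norm_smul, Real.norm_of_nonneg (Real.rpow_nonneg (by linarith [hτ.2]) _)]
    have := mul_le_mul_of_nonneg_left (h hτ) (Real.rpow_nonneg (show 0 ≤ t - τ by linarith [hτ.2]) (α - 1))
    linarith
  rw [intervalIntegral.integral_const_mul] at h1
  rw [RLint, norm_smul, norm_inv, Real.norm_of_nonneg hG.le, inv_mul_le_iff₀ hG]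
  have := mul_le_mul_of_nonneg_left hle hA
  linarith

theorem aux_ker_val {α a b t : ℝ} (h0 : 0 < α) :
    ∫ τ in a..b, (t - τ) ^ (α - 1) = ((t - a) ^ α - (t - b) ^ α) / α := by
  have e := intervalIntegral.integral_comp_sub_left (a := a) (b := b)
      (fun s => s ^ (α - 1)) t
  rw [e, integral_rpow (Or.inl (by linarith))]
  simp

theorem aux_holder {n : ℕ} {α C s t : ℝ} (h0 : 0 < α) (h1 : α < 1) {φ : ℝ → Evec n}
    (hm : Measurable φ) (hb : ∀ t, ‖φ t‖ ≤ C) (hs : 0 ≤ s) (hst : s ≤ t) :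
    ‖RLint α φ t - RLint α φ s‖ ≤ (Real.Gamma α)⁻¹ * (2 * C / α) * (t - s) ^ α := by
  have hC : 0 ≤ C := (norm_nonneg _).trans (hb 0)
  have hG := Real.Gamma_pos_of_pos h0
  rw [RLint, RLint, ← smul_sub, norm_smul, norm_inv, Real.norm_of_nonneg hG.le, mul_assoc]
  refine mul_le_mul_of_nonneg_left ?_ (inv_nonneg.2 hG.le)
  rw [← intervalIntegral.integral_add_adjacent_intervals (aux_int h0 hm hb 0 s)
    (aux_int (t := t) h0 hm hb s t), add_sub_right_comm,
    ← intervalIntegral.integral_sub (aux_int h0 hm hb 0 s) (aux_int h0 hm hb 0 s)]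
  have i1 := aux_ker_int (t := s) h0 0 s
  have i2 := aux_ker_int (t := t) h0 0 s
  have b1 : ‖∫ τ in (0:ℝ)..s, (((t - τ) ^ (α - 1) : ℝ) • φ τ - ((s - τ) ^ (α - 1) : ℝ) • φ τ)‖
      ≤ ∫ τ in (0:ℝ)..s, C * ((s - τ) ^ (α - 1) - (t - τ) ^ (α - 1)) := by
    refine intervalIntegral.norm_integral_le_of_norm_le hs ?_ ((i1.sub i2).const_mul _)
    have hne : ∀ᵐ τ : ℝ, τ ≠ s := by simp [ae_iff]
    filter_upwards [hne] with τ hn hτ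
    have hlt : τ < s := lt_of_le_of_ne hτ.2 hn
    have hle : (t - τ) ^ (α - 1) ≤ (s - τ) ^ (α - 1) :=
      Real.rpow_le_rpow_of_nonpos (by linarith) (by linarith) (by linarith)
    rw [← sub_smul, norm_smul, Real.norm_of_nonpos (by linarith), neg_sub, mul_comm]
    exact mul_le_mul_of_nonneg_right (hb τ) (by linarith)
  have b2 : ‖∫ τ in s..t, (((t - τ) ^ (α - 1) : ℝ) • φ τ)‖
      ≤ ∫ τ in s..t, C * ((t - τ) ^ (α - 1)) := by
    refine intervalIntegral.norm_integral_le_of_norm_le hst ?_ ((aux_ker_int h0 s t).const_mul _)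
    refine Filter.Eventually.of_forall fun τ hτ => ?_
    have : 0 ≤ (t - τ) ^ (α - 1) := Real.rpow_nonneg (by linarith [hτ.2]) _
    rw [norm_smul, Real.norm_of_nonneg this, mul_comm]
    exact mul_le_mul_of_nonneg_right (hb τ) this
  rw [intervalIntegral.integral_const_mul, intervalIntegral.integral_sub i1 i2,
    aux_ker_val h0, aux_ker_val h0] at b1
  rw [intervalIntegral.integral_const_mul, aux_ker_val h0] at b2
  simp only [sub_self, sub_zero, Real.zero_rpow h0.ne'] at b1 b2
  refine (norm_add_le _ _).trans ((add_le_add b1 b2).trans ?_)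
  have hm : s ^ α ≤ t ^ α := Real.rpow_le_rpow hs hst h0.le
  have : 2 * C / α * (t - s) ^ α - (C * (s ^ α / α - (t ^ α - (t - s) ^ α) / α) + C * ((t - s) ^ α / α))
      = C / α * (t ^ α - s ^ α) := by ring
  have h3 : 0 ≤ C / α * (t ^ α - s ^ α) := mul_nonneg (by positivity) (by linarith)
  linarith

theorem aux_holder' {n : ℕ} {α C s t : ℝ} (h0 : 0 < α) (h1 : α < 1) {φ : ℝ → Evec n}
    (hm : Measurable φ) (hb : ∀ t, ‖φ t‖ ≤ C) (hs : 0 ≤ s) (ht : 0 ≤ t) :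
    ‖RLint α φ t - RLint α φ s‖ ≤ (Real.Gamma α)⁻¹ * (2 * C / α) * |t - s| ^ α := by
  rcases le_total s t with h | h
  · rw [abs_of_nonneg (sub_nonneg.2 h)]; exact aux_holder h0 h1 hm hb hs h
  · rw [norm_sub_rev, abs_sub_comm, abs_of_nonneg (sub_nonneg.2 h)]
    exact aux_holder h0 h1 hm hb ht h

theorem aux_cont {n : ℕ} {α C : ℝ} (h0 : 0 < α) (h1 : α < 1) {φ : ℝ → Evec n}
    (hm : Measurable φ) (hb : ∀ t, ‖φ t‖ ≤ C) :
    Continuous fun t => RLint α φ (max t 0) := by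
  rw [continuous_iff_continuousAt]
  intro s
  rw [ContinuousAt, tendsto_iff_norm_sub_tendsto_zero]
  refine squeeze_zero (fun _ => norm_nonneg _)
    (fun t => aux_holder' h0 h1 hm hb (le_max_right s 0) (le_max_right t 0)) ?_
  have : Continuous fun t : ℝ => (Real.Gamma α)⁻¹ * (2 * C / α) * |max t 0 - max s 0| ^ α := by
    refine continuous_const.mul (Continuous.rpow_const (by fun_prop) (fun _ => Or.inr h0.le))
  have h := this.tendsto s
  simpa [Real.zero_rpow h0.ne'] using h

theorem aux_mu {α c : ℝ} (h0 : 0 < α) (hc : 0 < c) : ∃ μ > (0:ℝ), c * (1 / μ) ^ α = 1 / 2 := by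
  refine ⟨(2 * c) ^ (1 / α), by positivity, ?_⟩
  rw [Real.div_rpow zero_le_one (by positivity), Real.one_rpow, ← Real.rpow_mul (by positivity),
    one_div_mul_cancel h0.ne', Real.rpow_one]
  field_simp

theorem aux_gron {T μ a B : ℝ} (hμ : 0 < μ) (ha : 0 ≤ a) (hB : 0 ≤ B) {u : ℝ → ℝ}
    (hu : ∀ t ∈ Icc (0:ℝ) T, u t ≤ B)
    (H : ∀ M ≥ (0:ℝ), (∀ t ∈ Icc (0:ℝ) T, u t ≤ M * Real.exp (μ * t)) →
      ∀ t ∈ Icc (0:ℝ) T, u t ≤ (a + M / 2) * Real.exp (μ * t)) :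
    ∀ t ∈ Icc (0:ℝ) T, u t ≤ 2 * a * Real.exp (μ * t) := by
  have key : ∀ k : ℕ, ∀ t ∈ Icc (0:ℝ) T, u t ≤ (2 * a + B * (1 / 2) ^ k) * Real.exp (μ * t) := by
    intro k
    induction k with
    | zero =>
      intro t ht
      have h1 : 1 ≤ Real.exp (μ * t) := Real.one_le_exp (mul_nonneg hμ.le ht.1)
      have := hu t ht
      simp only [pow_zero, mul_one]
      nlinarith
    | succ k ih =>
      intro t ht
      have := H _ (by positivity) ih t ht
      refine this.trans (le_of_eq ?_)
      rw [pow_succ]; ring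
  intro t ht
  have hl : Filter.Tendsto (fun k : ℕ => (2 * a + B * (1 / 2 : ℝ) ^ k) * Real.exp (μ * t))
      Filter.atTop (nhds ((2 * a + B * 0) * Real.exp (μ * t))) :=
    ((((tendsto_pow_atTop_nhds_zero_of_lt_one (by norm_num) (by norm_num)).const_mul B).const_add
      _).mul_const _)
  have := ge_of_tendsto' hl (fun k => key k t ht)
  simpa using this

theorem aux_congr {n : ℕ} {α T t : ℝ} {φ ψ : ℝ → Evec n}
    (h : ∀ᵐ t ∂volume.restrict (Icc (0:ℝ) T), φ t = ψ t) (ht : t ∈ Icc (0:ℝ) T) :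
    RLint α φ t = RLint α ψ t := by
  rw [RLint, RLint]
  congr 1
  apply intervalIntegral.integral_congr_ae
  rw [ae_restrict_iff' measurableSet_Icc] at h
  filter_upwards [h] with τ h hτ
  rw [uIoc_of_le ht.1] at hτ
  rw [h ⟨hτ.1.le, hτ.2.trans ht.2⟩]

theorem aux_trunc {n : ℕ} {α T C : ℝ} (hC : 0 ≤ C) {φ : ℝ → Evec n} (hm : Measurable φ)
    (hb : ∀ᵐ t ∂volume.restrict (Icc (0:ℝ) T), ‖φ t‖ ≤ C) :
    ∃ ψ : ℝ → Evec n, Measurable ψ ∧ (∀ t, ‖ψ t‖ ≤ C) ∧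
      (∀ᵐ t ∂volume.restrict (Icc (0:ℝ) T), φ t = ψ t) ∧
      ∀ t ∈ Icc (0:ℝ) T, RLint α φ t = RLint α ψ t := by
  have hS : MeasurableSet {t | ‖φ t‖ ≤ C} := measurableSet_le hm.norm measurable_const
  have he : ∀ᵐ t ∂volume.restrict (Icc (0:ℝ) T), φ t = ({t | ‖φ t‖ ≤ C}).indicator φ t := by
    filter_upwards [hb] with t ht
    rw [indicator_of_mem]; exact ht
  refine ⟨({t | ‖φ t‖ ≤ C}).indicator φ, hm.indicator hS, ?_, he, fun t ht => aux_congr he ht⟩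
  intro t
  by_cases h : t ∈ {t | ‖φ t‖ ≤ C}
  · rw [indicator_of_mem h]; exact h
  · rw [indicator_of_notMem h]; simpa using hC

theorem aux_sub {n : ℕ} {α t C D : ℝ} (h0 : 0 < α) {φ ψ : ℝ → Evec n} (hm : Measurable φ)
    (hb : ∀ t, ‖φ t‖ ≤ C) (hm' : Measurable ψ) (hb' : ∀ t, ‖ψ t‖ ≤ D) :
    RLint α φ t - RLint α ψ t = RLint α (fun t => φ t - ψ t) t := by
  simp only [RLint]
  rw [← smul_sub, ← intervalIntegral.integral_sub (aux_int h0 hm hb 0 t) (aux_int h0 hm' hb' 0 t)]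
  simp only [smul_sub]

theorem aux_repr {α T : ℝ} {n : ℕ} (h0 : 0 < α) (h1 : α < 1) (hT : 0 < T)
    {f : ℝ → Evec n → Evec n} {x₀ : Evec n} {x : ℝ → Evec n} (hx : IsCaputoSol α T f x₀ x) :
    ∃ (φ : ℝ → Evec n) (C : ℝ), Measurable φ ∧ (∀ t, ‖φ t‖ ≤ C) ∧
      (∀ t ∈ Icc (0:ℝ) T, x t = x₀ + RLint α φ t) ∧
      ∀ᵐ t, t ∈ Icc (0:ℝ) T → φ t = f t (x t) := by
  obtain ⟨⟨φ, hm, ⟨C, hC⟩, hxφ⟩, hd⟩ := hx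
  obtain ⟨ψ, hψm, hψb, hψe, hψR⟩ := aux_trunc (α := α) (le_max_right C 0) hm
    (hC.mono fun t h => h.trans (le_max_left C 0))
  have hxψ : ∀ t ∈ Icc (0:ℝ) T, x t = x₀ + RLint α ψ t := fun t ht => by
    rw [hxφ t ht, hψR t ht]
  refine ⟨ψ, _, hψm, hψb, hxψ, ?_⟩
  rw [← ae_restrict_iff' measurableSet_Icc]
  filter_upwards [hd, aux_cap h0 h1 hT hψm hψb x₀ x hxψ] with t h1 h2
  rw [← h2, h1]

/-- a priori bound -/
theorem aux_bound {α T μ R₀ cf : ℝ} {n : ℕ} (h0 : 0 < α) (h1 : α < 1) (hT : 0 < T)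
    (hR₀ : 0 < R₀) (hμ : 0 < μ) (hcf : 0 < cf) (hμc : cf * (1 / μ) ^ α = 1 / 2)
    {f : ℝ → Evec n → Evec n}
    (hf3 : ∀ t ∈ Icc (0:ℝ) T, ∀ x : Evec n, ‖f t x‖ ≤ (1 + ‖x‖) * cf)
    {x₀ : Evec n} (hx₀ : ‖x₀‖ ≤ R₀) {x : ℝ → Evec n} (hx : IsCaputoSol α T f x₀ x) :
    ∀ t ∈ Icc (0:ℝ) T, ‖x t‖ ≤ 2 * (1 + R₀) * Real.exp (μ * T) := by
  obtain ⟨φ, C, hm, hb, hxφ, hφ⟩ := aux_repr h0 h1 hT hx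
  have hC : 0 ≤ C := (norm_nonneg _).trans (hb 0)
  have hmono : ∀ t ∈ Icc (0:ℝ) T, Real.exp (μ * t) ≤ Real.exp (μ * T) := fun t ht =>
    Real.exp_le_exp.2 (mul_le_mul_of_nonneg_left ht.2 hμ.le)
  have hge : ∀ t ∈ Icc (0:ℝ) T, 1 ≤ Real.exp (μ * t) := fun t ht =>
    Real.one_le_exp (mul_nonneg hμ.le ht.1)
  have hnx : ∀ t ∈ Icc (0:ℝ) T, 1 + ‖x t‖ ≤ (1 + R₀) + ‖RLint α φ t‖ := by
    intro t ht
    rw [hxφ t ht]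
    linarith [norm_add_le x₀ (RLint α φ t)]
  have main := aux_gron (T := T) (u := fun t => 1 + ‖x t‖) (a := 1 + R₀) hμ (by linarith)
    (B := (1 + R₀) + C * (1 / μ) ^ α * Real.exp (μ * T)) (by positivity) ?_ ?_
  · intro t ht
    have := main t ht
    have h2 := hmono t ht
    have : 2 * (1 + R₀) * Real.exp (μ * t) ≤ 2 * (1 + R₀) * Real.exp (μ * T) := by gcongr
    linarith
  · intro t ht
    have := aux_est (A := C) (φ := φ) h0 hμ ht.1 hC
      (Filter.Eventually.of_forall fun τ hτ => (hb τ).trans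
        (le_mul_of_one_le_right hC (hge τ ⟨hτ.1.le, hτ.2.trans ht.2⟩)))
    have h2 : C * (1 / μ) ^ α * Real.exp (μ * t) ≤ C * (1 / μ) ^ α * Real.exp (μ * T) := by
      have := hmono t ht
      gcongr
    linarith [hnx t ht]
  · intro M hM hu t ht
    have := aux_est (A := cf * M) (φ := φ) h0 hμ ht.1 (by positivity) (by
      filter_upwards [hφ] with τ h hτ
      have hτ' : τ ∈ Icc 0 T := ⟨hτ.1.le, hτ.2.trans ht.2⟩
      rw [h hτ']
      refine (hf3 τ hτ' _).trans ?_
      rw [mul_comm, mul_assoc]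
      exact mul_le_mul_of_nonneg_left (hu τ hτ') hcf.le)
    rw [show cf * M * (1 / μ) ^ α = M * (cf * (1 / μ) ^ α) by ring, hμc] at this
    have h2 := hge t ht
    have h3 := hnx t ht
    nlinarith

theorem aux_uniq {α T R : ℝ} {n : ℕ} (h0 : 0 < α) (h1 : α < 1) (hT : 0 < T) (hR : 0 < R)
    {f : ℝ → Evec n → Evec n}
    (hf2 : ∀ r > (0:ℝ), ∃ lam > (0:ℝ), ∀ t ∈ Icc (0:ℝ) T, ∀ x y : Evec n,
      ‖x‖ ≤ r → ‖y‖ ≤ r → ‖f t x - f t y‖ ≤ lam * ‖x - y‖)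
    {x₀ : Evec n} {x y : ℝ → Evec n} (hx : IsCaputoSol α T f x₀ x) (hy : IsCaputoSol α T f x₀ y)
    (hxR : ∀ t ∈ Icc (0:ℝ) T, ‖x t‖ ≤ R) (hyR : ∀ t ∈ Icc (0:ℝ) T, ‖y t‖ ≤ R) :
    EqOn x y (Icc (0:ℝ) T) := by
  obtain ⟨φ, C, hm, hb, hxφ, hφ⟩ := aux_repr h0 h1 hT hx
  obtain ⟨ψ, D, hm', hb', hyψ, hψ⟩ := aux_repr h0 h1 hT hy
  obtain ⟨lam, hlam, hL⟩ := hf2 R hR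
  obtain ⟨μ, hμ, hμc⟩ := aux_mu h0 hlam
  have main := aux_gron (T := T) (u := fun t => ‖x t - y t‖) (a := 0) hμ le_rfl
    (B := R + R) (by positivity)
    (fun t ht => (norm_sub_le _ _).trans (add_le_add (hxR t ht) (hyR t ht))) ?_
  · intro t ht
    have := main t ht
    simp only [mul_zero, zero_mul] at this
    exact sub_eq_zero.1 (norm_le_zero_iff.1 this)
  · intro M hM hu t ht
    have e : x t - y t = RLint α (fun t => φ t - ψ t) t := by
      rw [hxφ t ht, hyψ t ht, add_sub_add_left_eq_sub, aux_sub h0 hm hb hm' hb']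
    have := aux_est (A := lam * M) (φ := fun t => φ t - ψ t) h0 hμ ht.1 (by positivity) (by
      filter_upwards [hφ, hψ] with τ h h' hτ
      have hτ' : τ ∈ Icc 0 T := ⟨hτ.1.le, hτ.2.trans ht.2⟩
      rw [h hτ', h' hτ']
      refine (hL τ hτ' _ _ (hxR τ hτ') (hyR τ hτ')).trans ?_
      rw [mul_assoc]
      exact mul_le_mul_of_nonneg_left (hu τ hτ') hlam.le)
    rw [show lam * M * (1 / μ) ^ α = M * (lam * (1 / μ) ^ α) by ring, hμc] at this
    rw [e]
    linarith

open Classical in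
theorem aux_exist {α T μ R₀ cf : ℝ} {n : ℕ} (h0 : 0 < α) (h1 : α < 1) (hT : 0 < T)
    (hR₀ : 0 < R₀) (hμ : 0 < μ) (hcf : 0 < cf) (hμc : cf * (1 / μ) ^ α = 1 / 2)
    {f : ℝ → Evec n → Evec n}
    (hf1 : ∀ x : Evec n, Measurable fun t => f t x)
    (hf2 : ∀ r > (0:ℝ), ∃ lam > (0:ℝ), ∀ t ∈ Icc (0:ℝ) T, ∀ x y : Evec n,
      ‖x‖ ≤ r → ‖y‖ ≤ r → ‖f t x - f t y‖ ≤ lam * ‖x - y‖)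
    (hf3 : ∀ t ∈ Icc (0:ℝ) T, ∀ x : Evec n, ‖f t x‖ ≤ (1 + ‖x‖) * cf)
    {x₀ : Evec n} (hx₀ : ‖x₀‖ ≤ R₀) :
    ∃ (φ : ℝ → Evec n) (C : ℝ), Measurable φ ∧ (∀ t, ‖φ t‖ ≤ C) ∧
      ∀ t ∈ Icc (0:ℝ) T, φ t = f t (x₀ + RLint α φ t) := by
  set g : Evec n → ℝ → Evec n := fun x t => if t ∈ Icc (0:ℝ) T then f t x else 0 with hg
  have hgm : Measurable (Function.uncurry g) := by
    apply measurable_uncurry_of_continuous_of_measurable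
    · intro t
      by_cases ht : t ∈ Icc (0:ℝ) T
      · simp only [hg, if_pos ht]
        rw [continuous_iff_continuousAt]
        intro x
        obtain ⟨lam, hlam, hL⟩ := hf2 (‖x‖ + 1) (by positivity)
        rw [ContinuousAt, tendsto_iff_norm_sub_tendsto_zero]
        have hz : Filter.Tendsto (fun y : Evec n => lam * ‖y - x‖) (nhds x) (nhds 0) := by
          have : Continuous fun y : Evec n => lam * ‖y - x‖ := by fun_prop
          simpa using this.tendsto x
        refine squeeze_zero' (Filter.Eventually.of_forall fun _ => norm_nonneg _) ?_ hz
        filter_upwards [Metric.ball_mem_nhds x one_pos] with y hy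
        refine hL t ht y x ?_ (by linarith)
        rw [Metric.mem_ball, dist_eq_norm] at hy
        have := norm_add_le (y - x) x
        rw [sub_add_cancel] at this
        linarith
      · simp only [hg, if_neg ht]; exact continuous_const
    · intro x
      exact Measurable.ite measurableSet_Icc (hf1 x) measurable_const
  set N : (ℝ → Evec n) → ℝ → Evec n := fun φ t => g (x₀ + RLint α φ (max t 0)) t with hN
  set D : ℝ := cf * (2 * (1 + R₀)) with hD
  have hDpos : 0 < D := by positivity
  have hmono : ∀ t ∈ Icc (0:ℝ) T, Real.exp (μ * t) ≤ Real.exp (μ * T) := fun t ht =>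
    Real.exp_le_exp.2 (mul_le_mul_of_nonneg_left ht.2 hμ.le)
  have hge : ∀ t ∈ Icc (0:ℝ) T, 1 ≤ Real.exp (μ * t) := fun t ht =>
    Real.one_le_exp (mul_nonneg hμ.le ht.1)
  let P : (ℝ → Evec n) → Prop := fun φ => Measurable φ ∧ (∀ t, t ∉ Icc (0:ℝ) T → φ t = 0) ∧
    ∀ t ∈ Icc (0:ℝ) T, ‖φ t‖ ≤ D * Real.exp (μ * t)
  have hPb : ∀ φ, P φ → ∀ t, ‖φ t‖ ≤ D * Real.exp (μ * T) := by
    intro φ hφ t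
    by_cases ht : t ∈ Icc (0:ℝ) T
    · exact (hφ.2.2 t ht).trans (mul_le_mul_of_nonneg_left (hmono t ht) hDpos.le)
    · rw [hφ.2.1 t ht, norm_zero]; positivity
  have hPx : ∀ φ, P φ → ∀ t ∈ Icc (0:ℝ) T,
      1 + ‖x₀ + RLint α φ t‖ ≤ 2 * (1 + R₀) * Real.exp (μ * t) := by
    intro φ hφ t ht
    have := aux_est (A := D) (φ := φ) h0 hμ ht.1 hDpos.le (Filter.Eventually.of_forall
      fun τ hτ => hφ.2.2 τ ⟨hτ.1.le, hτ.2.trans ht.2⟩)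
    rw [hD, show cf * (2 * (1 + R₀)) * (1 / μ) ^ α = 2 * (1 + R₀) * (cf * (1 / μ) ^ α) by ring,
      hμc] at this
    have h2 := hge t ht
    have h3 := norm_add_le x₀ (RLint α φ t)
    nlinarith
  have hNt : ∀ φ, ∀ t ∈ Icc (0:ℝ) T, N φ t = f t (x₀ + RLint α φ t) := by
    intro φ t ht
    simp only [hN, hg, if_pos ht, max_eq_left ht.1]
  have hNo : ∀ φ, ∀ t, t ∉ Icc (0:ℝ) T → N φ t = 0 := by
    intro φ t ht
    simp only [hN, hg, if_neg ht]
  have hPN : ∀ φ, P φ → P (N φ) := by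
    intro φ hφ
    refine ⟨?_, hNo φ, ?_⟩
    · have hc := (aux_cont h0 h1 hφ.1 (hPb φ hφ)).measurable
      exact hgm.comp ((hc.const_add x₀).prodMk measurable_id)
    · intro t ht
      rw [hNt φ t ht]
      refine (hf3 t ht _).trans ?_
      have := mul_le_mul_of_nonneg_left (hPx φ hφ t ht) hcf.le
      rw [hD]; linarith
  set R : ℝ := 2 * (1 + R₀) * Real.exp (μ * T) with hR
  obtain ⟨lam, hlam, hL⟩ := hf2 R (by positivity)
  obtain ⟨ν, hν, hνc⟩ := aux_mu h0 hlam
  have hPR : ∀ φ, P φ → ∀ t ∈ Icc (0:ℝ) T, ‖x₀ + RLint α φ t‖ ≤ R := by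
    intro φ hφ t ht
    have h2 := hPx φ hφ t ht
    have : 2 * (1 + R₀) * Real.exp (μ * t) ≤ R :=
      mul_le_mul_of_nonneg_left (hmono t ht) (by positivity)
    linarith
  have hcon : ∀ φ ψ, P φ → P ψ → ∀ A ≥ (0:ℝ), (∀ t, ‖φ t - ψ t‖ ≤ A * Real.exp (ν * t)) →
      ∀ t, ‖N φ t - N ψ t‖ ≤ A / 2 * Real.exp (ν * t) := by
    intro φ ψ hφ hψ A hA h t
    by_cases ht : t ∈ Icc (0:ℝ) T
    · rw [hNt φ t ht, hNt ψ t ht]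
      refine (hL t ht _ _ (hPR φ hφ t ht) (hPR ψ hψ t ht)).trans ?_
      rw [add_sub_add_left_eq_sub, aux_sub h0 hφ.1 (hPb φ hφ) hψ.1 (hPb ψ hψ)]
      have := aux_est (A := A) (φ := fun t => φ t - ψ t) h0 hν ht.1 hA
        (Filter.Eventually.of_forall fun τ _ => h τ)
      have h2 := mul_le_mul_of_nonneg_left this hlam.le
      rw [show lam * (A * (1 / ν) ^ α * rexp (ν * t)) = A * (lam * (1 / ν) ^ α) * rexp (ν * t) by
        ring, hνc] at h2
      linarith
    · rw [hNo φ t ht, hNo ψ t ht, sub_self, norm_zero]; positivity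
  let sq : ℕ → ℝ → Evec n := fun k => N^[k] 0
  have hsq : ∀ k, sq (k + 1) = N (sq k) := fun k => Function.iterate_succ_apply' N k 0
  have hPs : ∀ k, P (sq k) := by
    intro k
    induction k with
    | zero =>
      refine ⟨measurable_const, fun _ _ => rfl, fun t _ => ?_⟩
      show ‖(0 : Evec n)‖ ≤ _
      rw [norm_zero]; positivity
    | succ k ih => rw [hsq]; exact hPN _ ih
  set A : ℝ := D * Real.exp (μ * T) with hA
  have hApos : 0 < A := by positivity
  have hdiff : ∀ k, ∀ t, ‖sq k t - sq (k + 1) t‖ ≤ (A * (1 / 2) ^ k) * Real.exp (ν * t) := by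
    intro k
    induction k with
    | zero =>
      intro t
      have e : sq 0 t = 0 := rfl
      rw [e, zero_sub, norm_neg, pow_zero, mul_one]
      by_cases ht : t ∈ Icc (0:ℝ) T
      · refine (hPb _ (hPs _) t).trans (le_mul_of_one_le_right hApos.le ?_)
        exact Real.one_le_exp (mul_nonneg hν.le ht.1)
      · rw [(hPs 1).2.1 t ht, norm_zero]; positivity
    | succ k ih =>
      intro t
      have := hcon _ _ (hPs k) (hPs (k+1)) _ (by positivity) ih t
      rw [← hsq, ← hsq] at this
      refine this.trans (le_of_eq ?_)
      rw [pow_succ]; ring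
  have hdist : ∀ t k, dist (sq k t) (sq (k + 1) t) ≤ (A * Real.exp (ν * t)) * (1 / 2) ^ k := by
    intro t k
    rw [dist_eq_norm]
    refine (hdiff k t).trans (le_of_eq (by ring))
  have hlim : ∀ t, ∃ y, Filter.Tendsto (fun k => sq k t) Filter.atTop (nhds y) := fun t =>
    cauchySeq_tendsto_of_complete (cauchySeq_of_le_geometric (1/2) _ (by norm_num) (hdist t))
  choose φ hφ using hlim
  have hφm : Measurable φ :=
    measurable_of_tendsto_metrizable (fun k => (hPs k).1) (tendsto_pi_nhds.2 hφ)
  have hPφ : P φ := by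
    refine ⟨hφm, fun t ht => ?_, fun t ht => ?_⟩
    · refine tendsto_nhds_unique (hφ t) ?_
      have : (fun k => sq k t) = fun _ => 0 := funext fun k => (hPs k).2.1 t ht
      rw [this]; exact tendsto_const_nhds
    · exact le_of_tendsto' (hφ t).norm fun k => (hPs k).2.2 t ht
  have herr : ∀ k t, ‖sq k t - φ t‖ ≤ (2 * A * (1 / 2) ^ k) * Real.exp (ν * t) := by
    intro k t
    have := dist_le_of_le_geometric_of_tendsto (1/2) _ (by norm_num) (hdist t) (hφ t) k
    rw [dist_eq_norm] at this
    refine this.trans (le_of_eq ?_)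
    ring
  have hfix : ∀ t, φ t = N φ t := by
    intro t
    refine tendsto_nhds_unique ((Filter.tendsto_add_atTop_iff_nat 1).2 (hφ t)) ?_
    rw [tendsto_iff_norm_sub_tendsto_zero]
    have hl : Filter.Tendsto (fun k : ℕ => (2 * A * (1 / 2 : ℝ) ^ k) / 2 * Real.exp (ν * t))
        Filter.atTop (nhds ((2 * A * 0) / 2 * Real.exp (ν * t))) :=
      ((((tendsto_pow_atTop_nhds_zero_of_lt_one (by norm_num) (by norm_num)).const_mul
        (2 * A)).div_const _).mul_const _)
    rw [mul_zero, zero_div, zero_mul] at hl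
    refine squeeze_zero (fun _ => norm_nonneg _) (fun k => ?_) hl
    rw [hsq]
    exact hcon _ _ (hPs k) hPφ _ (by positivity) (herr k) t
  exact ⟨φ, _, hφm, hPb φ hPφ, fun t ht => by rw [← hNt φ t ht]; exact hfix t⟩

theorem stmt10 (α T R₀ : ℝ) (hα : α ∈ Ioo (0:ℝ) 1) (hT : 0 < T) (hR₀ : 0 < R₀) (n : ℕ)
    (f : ℝ → Evec n → Evec n)
    (hf1 : ∀ x : Evec n, Measurable fun t => f t x)
    (hf2 : ∀ r > (0:ℝ), ∃ lam > (0:ℝ), ∀ t ∈ Icc (0:ℝ) T, ∀ x y : Evec n,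
      ‖x‖ ≤ r → ‖y‖ ≤ r → ‖f t x - f t y‖ ≤ lam * ‖x - y‖)
    (cf : ℝ) (hcf : 0 < cf)
    (hf3 : ∀ t ∈ Icc (0:ℝ) T, ∀ x : Evec n, ‖f t x‖ ≤ (1 + ‖x‖) * cf) :
    (∀ x₀ : Evec n, ‖x₀‖ ≤ R₀ →
      ∃ x : ℝ → Evec n, IsCaputoSol α T f x₀ x ∧
        ∀ x' : ℝ → Evec n, IsCaputoSol α T f x₀ x' → EqOn x' x (Icc (0:ℝ) T)) ∧
    ∃ R H : ℝ, 0 < R ∧ 0 < H ∧ ∀ (x₀ : Evec n) (x : ℝ → Evec n), ‖x₀‖ ≤ R₀ →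
      IsCaputoSol α T f x₀ x →
      ∀ t ∈ Icc (0:ℝ) T, ∀ τ ∈ Icc (0:ℝ) T,
        ‖x t‖ ≤ R ∧ ‖x t - x τ‖ ≤ H * |t - τ| ^ α := by

  obtain ⟨h0, h1⟩ := hα
  obtain ⟨μ, hμ, hμc⟩ := aux_mu h0 hcf
  have hbd := fun (x₀ : Evec n) (hx₀ : ‖x₀‖ ≤ R₀) (x : ℝ → Evec n)
    (hx : IsCaputoSol α T f x₀ x) => aux_bound h0 h1 hT hR₀ hμ hcf hμc hf3 hx₀ hx
  set R : ℝ := 2 * (1 + R₀) * Real.exp (μ * T) with hR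
  have hRpos : 0 < R := by positivity
  have hG := Real.Gamma_pos_of_pos h0
  refine ⟨fun x₀ hx₀ => ?_, R, (Real.Gamma α)⁻¹ * (2 * ((1 + R) * cf) / α), hRpos,
    by positivity, ?_⟩
  · obtain ⟨φ, C, hm, hb, hφ⟩ := aux_exist h0 h1 hT hR₀ hμ hcf hμc hf1 hf2 hf3 hx₀
    have hsol : IsCaputoSol α T f x₀ (fun t => x₀ + RLint α φ t) := by
      refine ⟨⟨φ, hm, ⟨C, Filter.Eventually.of_forall hb⟩, fun _ _ => rfl⟩, ?_⟩
      filter_upwards [aux_cap h0 h1 hT hm hb x₀ (fun t => x₀ + RLint α φ t) (fun _ _ => rfl),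
        ae_restrict_mem measurableSet_Icc] with t ht htI
      rw [ht, ← hφ t htI]
    exact ⟨_, hsol, fun x' hx' => aux_uniq h0 h1 hT hRpos hf2 hx' hsol
      (hbd x₀ hx₀ _ hx') (hbd x₀ hx₀ _ hsol)⟩
  · intro x₀ x hx₀ hx t ht τ hτ
    have hxR := hbd x₀ hx₀ x hx
    refine ⟨hxR t ht, ?_⟩
    obtain ⟨φ, C, hm, hb, hxφ, hφ⟩ := aux_repr h0 h1 hT hx
    obtain ⟨ψ, hψm, hψb, -, hψR⟩ := aux_trunc (α := α) (T := T) (C := (1 + R) * cf)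
      (by positivity) hm (by
        rw [ae_restrict_iff' measurableSet_Icc]
        filter_upwards [hφ] with s h hs
        rw [h hs]
        refine (hf3 s hs _).trans ?_
        have := hxR s hs
        gcongr)
    rw [hxφ t ht, hxφ τ hτ, add_sub_add_left_eq_sub, hψR t ht, hψR τ hτ]
    exact aux_holder' h0 h1 hψm hψb hτ.1 ht.1
end
end
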